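/- arXiv:2504.00529 — 3 statements merged into one kernel-verified Lean document; each statement's English description precedes it below -/
import Mathlib

section
/- Let Γ be a finite extensive-form game with perfect recall, let β be a behavioral strategy profile, let i ∈ N and j ∈ M_i. Then: (i) if S^i(I_i^q|β) > 0 for some q ∈ M(I_i^j), then S^i(I_i^j|β) > 0; and (ii) if S^i(I_i^j|β) = 0, then S^i(I_i^q|β) = 0 for all q ∈ M(I_i^j). -/
open scoped Classical

noncomputable section

/-- A finite extensive-form game.  Actions are labelled by natural numbers drawn from the
finite pool `actFinset`; a history is the list of actions taken so far; players are `Fin n`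
and `P h = none` means that the chance player moves after `h`.  The information sets of
player `i` are `Info i j` for `j < m i`, and `infoIdx h` is the index of the information
set containing a nonterminal history `h` at which some player moves.  Payoffs `u i h` are
relevant on terminal histories. -/
structure EFG where
  n : ℕ
  actFinset : Finset ℕ
  H : Finset (List ℕ)
  P : List ℕ → Option (Fin n)
  fc : List ℕ → ℕ → ℝ
  m : Fin n → ℕ
  Info : Fin n → ℕ → Finset (List ℕ)
  infoIdx : List ℕ → ℕ
  u : Fin n → List ℕ → ℝ
  empty_mem : ([] : List ℕ) ∈ H
  prefixClosed : ∀ h ∈ H, ∀ h' : List ℕ, h' <+: h → h' ∈ H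
  act_mem : ∀ (h : List ℕ) (a : ℕ), h ++ [a] ∈ H → a ∈ actFinset
  fc_nonneg : ∀ h a, 0 ≤ fc h a
  fc_sum : ∀ h ∈ H, P h = none → (∃ a, h ++ [a] ∈ H) →
    ∑ a ∈ actFinset.filter (fun a => h ++ [a] ∈ H), fc h a = 1
  info_spec : ∀ (i : Fin n) (j : ℕ) (h : List ℕ), j < m i →
    (h ∈ Info i j ↔ h ∈ H ∧ P h = some i ∧ (∃ a, h ++ [a] ∈ H) ∧ infoIdx h = j)
  infoIdx_lt : ∀ (i : Fin n), ∀ h ∈ H, P h = some i → (∃ a, h ++ [a] ∈ H) → infoIdx h < m i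
  info_nonempty : ∀ (i : Fin n) (j : ℕ), j < m i → (Info i j).Nonempty
  info_actions : ∀ (i : Fin n) (j : ℕ), j < m i → ∀ h ∈ Info i j, ∀ h' ∈ Info i j,
    ∀ a : ℕ, (h ++ [a] ∈ H ↔ h' ++ [a] ∈ H)
  act_unique : ∀ (h h' : List ℕ) (a : ℕ), h ∈ H → h' ∈ H → h ++ [a] ∈ H → h' ++ [a] ∈ H →
    P h = P h' ∧ infoIdx h = infoIdx h'

namespace EFG

/-- Behavioral strategy profiles (player, information-set index, action ↦ probability). -/
abbrev Profile (G : EFG) : Type := Fin G.n → ℕ → ℕ → ℝ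

/-- Belief systems (player, information-set index, history ↦ probability). -/
abbrev Belief (G : EFG) : Type := Fin G.n → ℕ → List ℕ → ℝ

variable (G : EFG)

/-- The set `Z` of terminal histories. -/
def Zset : Finset (List ℕ) := G.H.filter fun h => ∀ a : ℕ, h ++ [a] ∉ G.H

/-- The set `A(h)` of actions available after a history. -/
def A (h : List ℕ) : Finset ℕ := G.actFinset.filter fun a => h ++ [a] ∈ G.H

/-- The common action set `A(I_i^j)` of an information set. -/
def infoA (i : Fin G.n) (j : ℕ) : Finset ℕ := (G.Info i j).sup fun h => G.A h

/-- A behavioral strategy of player `i`: a probability distribution on `A(I_i^j)` for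
each information set `I_i^j`. -/
def IsBehStrategy (i : Fin G.n) (b : ℕ → ℕ → ℝ) : Prop :=
  ∀ j < G.m i, (∀ a ∈ G.infoA i j, 0 ≤ b j a) ∧ ∑ a ∈ G.infoA i j, b j a = 1

/-- A behavioral strategy profile. -/
def IsBehProfile (β : G.Profile) : Prop := ∀ i : Fin G.n, G.IsBehStrategy i (β i)

/-- The probability of action `a` at history `h`: the chance distribution if the chance
player moves, and the mover's behavioral strategy otherwise. -/
def moveProb (β : G.Profile) (h : List ℕ) (a : ℕ) : ℝ :=
  (G.P h).elim (G.fc h a) fun i => β i (G.infoIdx h) a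

/-- Player `i`'s record `X_i` of the information sets he encounters along a history and the
actions he takes at them, accumulated starting from the prefix `pre`. -/
def recordFrom (i : Fin G.n) : List ℕ → List ℕ → List (ℕ × ℕ)
  | _, [] => []
  | pre, b :: rest =>
    (if G.P pre = some i then [(G.infoIdx pre, b)] else []) ++ recordFrom i (pre ++ [b]) rest

/-- Perfect recall. -/
def PerfectRecall : Prop :=
  ∀ (i : Fin G.n) (j : ℕ), j < G.m i →
    ∀ h ∈ G.Info i j, ∀ h' ∈ G.Info i j, G.recordFrom i [] h = G.recordFrom i [] h'

/-- Product of the move probabilities along `rest`, continuing from the prefix `pre`. -/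
def prodAlong (β : G.Profile) : List ℕ → List ℕ → ℝ
  | _, [] => 1
  | pre, b :: rest => G.moveProb β pre b * prodAlong β (pre ++ [b]) rest

/-- `ω(h|β)`: the probability that the moves along `h` are played under `β`. -/
def omega (β : G.Profile) (h : List ℕ) : ℝ := G.prodAlong β [] h

/-- `ω(I_i^j|β)`. -/
def omegaInfo (i : Fin G.n) (j : ℕ) (β : G.Profile) : ℝ := ∑ h ∈ G.Info i j, G.omega β h

/-- Product of the move probabilities along `rest` from `pre`, disregarding player `i`'s
own moves. -/
def prodAlongNot (i : Fin G.n) (β : G.Profile) : List ℕ → List ℕ → ℝ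
  | _, [] => 1
  | pre, b :: rest =>
    (if G.P pre = some i then 1 else G.moveProb β pre b) * prodAlongNot i β (pre ++ [b]) rest

/-- `S^i(h|β)`: probability of the moves along `h`, disregarding player `i`'s own moves. -/
def Sh (i : Fin G.n) (β : G.Profile) (h : List ℕ) : ℝ := G.prodAlongNot i β [] h

/-- `S^i(I_i^j|β)`. -/
def SInfo (i : Fin G.n) (j : ℕ) (β : G.Profile) : ℝ := ∑ h ∈ G.Info i j, G.Sh i β h

/-- Product of the move probabilities along `rest` from `pre`, with the factor at prefixes
lying in `I_i^j` omitted. -/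
def prodAlongSkip (i : Fin G.n) (j : ℕ) (β : G.Profile) : List ℕ → List ℕ → ℝ
  | _, [] => 1
  | pre, b :: rest =>
    (if pre ∈ G.Info i j then 1 else G.moveProb β pre b) * prodAlongSkip i j β (pre ++ [b]) rest

/-- `q ∈ M(a, I_i^j)`: `I_i^q` is a first information set of player `i` after action `a`
(every history in `I_i^q` contains `a`, with no later action of `a` lying in any action set
of player `i`). -/
def FirstAfter (i : Fin G.n) (a : ℕ) (q : ℕ) : Prop :=
  q < G.m i ∧ ∀ h ∈ G.Info i q, ∃ l₁ l₂ : List ℕ,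
    h = l₁ ++ a :: l₂ ∧ ∀ b ∈ l₂, ∀ p < G.m i, b ∉ G.infoA i p

/-- `q ∈ M(I_i^j) = ∪_{a ∈ A(I_i^j)} M(a, I_i^j)`. -/
def MInfo (i : Fin G.n) (j : ℕ) (q : ℕ) : Prop := ∃ a ∈ G.infoA i j, G.FirstAfter i a q

/-- `q ∈ Λ(a, I_i^j)`: every history in `I_i^q` contains the action `a`. -/
def LambdaSet (i : Fin G.n) (a : ℕ) (q : ℕ) : Prop :=
  q < G.m i ∧ ∀ h ∈ G.Info i q, ∃ l₁ l₂ : List ℕ, h = l₁ ++ a :: l₂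

/-- `ϱ^i_{I_i^j}(β, β̃)`: replace player `i`'s component of `β` by that of `β̃` at every
information set `I_i^q` such that some history in `I_i^q` contains an action of `A(I_i^j)`. -/
def rho (i : Fin G.n) (j : ℕ) (β βt : G.Profile) : G.Profile := fun p q =>
  if p = i ∧ ∃ h ∈ G.Info i q, ∃ b ∈ h, b ∈ G.infoA i j then βt i q else β p q

/-- A belief system: a probability distribution on each information set. -/
def IsBelief (μ : G.Belief) : Prop :=
  ∀ (i : Fin G.n) (j : ℕ), j < G.m i →
    (∀ h ∈ G.Info i j, 0 ≤ μ i j h) ∧ ∑ h ∈ G.Info i j, μ i j h = 1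

/-- A self-independent belief system for `β`:
`S^i(I_i^j|β) · μ^i_{I_i^j}(h) = S^i(h|β)`. -/
def SelfIndep (β : G.Profile) (μ : G.Belief) : Prop :=
  ∀ (i : Fin G.n) (j : ℕ), j < G.m i → ∀ h ∈ G.Info i j,
    G.SInfo i j β * μ i j h = G.Sh i β h

/-- Auxiliary for `ν`: scan `rest` from `pre` for the subhistory lying in `I_i^j`, then
weight by the belief and multiply the move probabilities of the remaining moves (the move
taken at the subhistory itself being skipped). -/
def nuAux (i : Fin G.n) (j : ℕ) (β : G.Profile) (w : List ℕ → ℝ) : List ℕ → List ℕ → ℝ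
  | _, [] => 0
  | pre, b :: rest =>
    if pre ∈ G.Info i j then w pre * G.prodAlong β (pre ++ [b]) rest
    else nuAux i j β w (pre ++ [b]) rest

/-- `ν^i_{I_i^j}(h | a, β^{-I_i^j}, μ)` (it does not involve the component of `β` at
`I_i^j`). -/
def nu (i : Fin G.n) (j : ℕ) (β : G.Profile) (μ : G.Belief) (h : List ℕ) : ℝ :=
  G.nuAux i j β (μ i j) [] h

/-- `u^i((a, β^{-I_i^j}) ∧ I_i^j)`. -/
def uWedgeAct (i : Fin G.n) (j : ℕ) (a : ℕ) (β : G.Profile) : ℝ :=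
  ∑ h ∈ G.Zset.filter (fun h => a ∈ h), G.u i h * G.prodAlongSkip i j β [] h

/-- `u^i(β ∧ I_i^j)`. -/
def uWedge (i : Fin G.n) (j : ℕ) (β : G.Profile) : ℝ :=
  ∑ h ∈ G.Zset.filter (fun h => ∃ b ∈ h, b ∈ G.infoA i j), G.u i h * G.omega β h

/-- The conditional expected payoff `u^i(a, β^{-I_i^j}, μ | I_i^j)`. -/
def uCond (i : Fin G.n) (j : ℕ) (a : ℕ) (β : G.Profile) (μ : G.Belief) : ℝ :=
  ∑ h ∈ G.Zset.filter (fun h => a ∈ h), G.u i h * G.nu i j β μ h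

/-- The expected payoff `u^i(β)`. -/
def uExp (i : Fin G.n) (β : G.Profile) : ℝ := ∑ h ∈ G.Zset, G.u i h * G.omega β h

/-- The profile obtained from `β` by replacing all of player `i`'s components by `b`. -/
def replace (β : G.Profile) (i : Fin G.n) (b : ℕ → ℕ → ℝ) : G.Profile :=
  fun p => if p = i then b else β p

/-- `β` is a Nash equilibrium in behavioral strategies. -/
def IsNash (β : G.Profile) : Prop :=
  G.IsBehProfile β ∧ ∀ (i : Fin G.n) (b : ℕ → ℕ → ℝ), G.IsBehStrategy i b →
    G.uExp i (G.replace β i b) ≤ G.uExp i β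

/-- `(β, β̃, μ)` satisfies the Nash characterization (Definition 2 of the paper). -/
def NashChar (β βt : G.Profile) (μ : G.Belief) : Prop :=
  (∀ (i : Fin G.n) (j : ℕ), j < G.m i → ∀ a' ∈ G.infoA i j, ∀ a'' ∈ G.infoA i j,
    G.uWedgeAct i j a' (G.rho i j β βt) < G.uWedgeAct i j a'' (G.rho i j β βt) →
    β i j a' = 0) ∧
  (∀ (i : Fin G.n) (j : ℕ), j < G.m i → ∀ a' ∈ G.infoA i j, ∀ a'' ∈ G.infoA i j,
    G.uCond i j a' (G.rho i j β βt) μ < G.uCond i j a'' (G.rho i j β βt) μ →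
    βt i j a' = 0) ∧
  G.IsBelief μ ∧ G.SelfIndep β μ

/-- `r` is the root of a subgame: every information set lies entirely inside or entirely
outside the set of histories extending `r`. -/
def IsSubgameRoot (r : List ℕ) : Prop :=
  r ∈ G.H ∧ ∀ (i : Fin G.n) (j : ℕ), j < G.m i →
    (∀ h ∈ G.Info i j, r <+: h) ∨ ∀ h ∈ G.Info i j, ¬ r <+: h

/-- The depth `g` of the smallest subgame containing `A(I_i^j)` (the length of the longest
subgame root preceding every history of `I_i^j`). -/
def sgDepthInfo (i : Fin G.n) (j : ℕ) : ℕ :=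
  (G.H.filter fun r => G.IsSubgameRoot r ∧ ∀ h ∈ G.Info i j, r <+: h).sup List.length

/-- The depth `q(h)` of the smallest subgame containing the last action of `h`. -/
def sgDepthHist (h : List ℕ) : ℕ :=
  (G.H.filter fun r => G.IsSubgameRoot r ∧ r <+: h.dropLast).sup List.length

/-- `C^i_{I_i^j}(h|β)`: product of move probabilities along `h` within the smallest subgame
containing `A(I_i^j)`. -/
def Ch (i : Fin G.n) (j : ℕ) (β : G.Profile) (h : List ℕ) : ℝ :=
  G.prodAlong β (h.take (G.sgDepthInfo i j)) (h.drop (G.sgDepthInfo i j))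

/-- `C^i_{I_i^j}(I_i^j|β)`. -/
def CInfo (i : Fin G.n) (j : ℕ) (β : G.Profile) : ℝ := ∑ h ∈ G.Info i j, G.Ch i j β h

/-- `u^i((a, β^{-I_i^j}) ⋄ I_i^j)`. -/
def uDiamondAct (i : Fin G.n) (j : ℕ) (a : ℕ) (β : G.Profile) : ℝ :=
  ∑ h ∈ G.Zset.filter (fun h => a ∈ h), G.u i h *
    G.prodAlongSkip i j β (h.take (G.sgDepthInfo i j)) (h.drop (G.sgDepthInfo i j))

/-- `Y^i(h|β)`: like `S^i(h|β)` but within the smallest subgame containing the last action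
of `h`. -/
def Yh (i : Fin G.n) (β : G.Profile) (h : List ℕ) : ℝ :=
  G.prodAlongNot i β (h.take (G.sgDepthHist h)) (h.drop (G.sgDepthHist h))

/-- `Y^i(I_i^j|β)`. -/
def YInfo (i : Fin G.n) (j : ℕ) (β : G.Profile) : ℝ := ∑ h ∈ G.Info i j, G.Yh i β h

/-- The belief condition `Y^i(I_i^j|β) · μ^i_{I_i^j}(h) = Y^i(h|β)`. -/
def YConsistent (β : G.Profile) (μ : G.Belief) : Prop :=
  ∀ (i : Fin G.n) (j : ℕ), j < G.m i → ∀ h ∈ G.Info i j,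
    G.YInfo i j β * μ i j h = G.Yh i β h

/-- The expected payoff of player `i` in the subgame rooted at `r` (payoffs of terminal
histories extending `r`, weighted by the move probabilities within the subgame). -/
def uExpFrom (i : Fin G.n) (β : G.Profile) (r : List ℕ) : ℝ :=
  ∑ h ∈ G.Zset.filter (fun h => r <+: h), G.u i h * G.prodAlong β r (h.drop r.length)

/-- `β` is a subgame perfect equilibrium in behavioral strategies: its restriction to every
subgame is a Nash equilibrium in behavioral strategies of that subgame. -/
def IsSubgamePerfect (β : G.Profile) : Prop :=
  G.IsBehProfile β ∧ ∀ r : List ℕ, G.IsSubgameRoot r →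
    ∀ (i : Fin G.n) (b : ℕ → ℕ → ℝ), G.IsBehStrategy i b →
      G.uExpFrom i (G.replace β i b) r ≤ G.uExpFrom i β r

/-- `(β, β̃, μ)` satisfies the subgame perfect characterization (Definition 6 of the
paper). -/
def SubgameChar (β βt : G.Profile) (μ : G.Belief) : Prop :=
  (∀ (i : Fin G.n) (j : ℕ), j < G.m i → ∀ a' ∈ G.infoA i j, ∀ a'' ∈ G.infoA i j,
    G.uDiamondAct i j a' (G.rho i j β βt) < G.uDiamondAct i j a'' (G.rho i j β βt) →
    β i j a' = 0) ∧
  (∀ (i : Fin G.n) (j : ℕ), j < G.m i → ∀ a' ∈ G.infoA i j, ∀ a'' ∈ G.infoA i j,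
    G.uCond i j a' (G.rho i j β βt) μ < G.uCond i j a'' (G.rho i j β βt) μ →
    βt i j a' = 0) ∧
  G.IsBelief μ ∧ G.YConsistent β μ

/-- `(β, μ)` is a semi-sequential equilibrium. -/
def SemiSeqEq (β : G.Profile) (μ : G.Belief) : Prop :=
  G.IsBehProfile β ∧ G.IsBelief μ ∧ G.SelfIndep β μ ∧
  ∀ (i : Fin G.n) (j : ℕ), j < G.m i → ∀ a' ∈ G.infoA i j, ∀ a'' ∈ G.infoA i j,
    G.uCond i j a' β μ < G.uCond i j a'' β μ → β i j a' = 0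

/-- `(β, μ)` is a subgame perfect semi-sequential equilibrium. -/
def SubgameSemiSeqEq (β : G.Profile) (μ : G.Belief) : Prop :=
  G.IsBehProfile β ∧ G.IsBelief μ ∧ G.YConsistent β μ ∧
  ∀ (i : Fin G.n) (j : ℕ), j < G.m i → ∀ a' ∈ G.infoA i j, ∀ a'' ∈ G.infoA i j,
    G.uCond i j a' β μ < G.uCond i j a'' β μ → β i j a' = 0

/-- `d(I_i^j)`: the number of information sets of player `i` containing a prefix of some
history of `I_i^j` (counting `I_i^j` itself). -/
def dInfo (i : Fin G.n) (j : ℕ) : ℕ :=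
  ((Finset.range (G.m i)).filter
    (fun q => ∃ h ∈ G.Info i j, ∃ p : List ℕ, p <+: h ∧ p ∈ G.Info i q)).card

end EFG

theorem EFG.moveProb_nonneg (G : EFG) (β : G.Profile) (hβ : G.IsBehProfile β)
    (pre : List ℕ) (b : ℕ) (h : pre ++ [b] ∈ G.H) : 0 ≤ G.moveProb β pre b := by
  have hpre : pre ∈ G.H := G.prefixClosed _ h _ (List.prefix_append _ _)
  unfold EFG.moveProb
  cases hP : G.P pre with
  | none => exact G.fc_nonneg _ _
  | some k =>
    have hlt := G.infoIdx_lt k pre hpre hP ⟨b, h⟩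
    refine (hβ k _ hlt).1 b ?_
    have hmem : pre ∈ G.Info k (G.infoIdx pre) :=
      (G.info_spec k _ pre hlt).2 ⟨hpre, hP, ⟨b, h⟩, rfl⟩
    unfold EFG.infoA
    rw [Finset.mem_sup]
    exact ⟨pre, hmem, Finset.mem_filter.2 ⟨G.act_mem _ _ h, h⟩⟩

theorem EFG.prodAlongNot_nonneg (G : EFG) (β : G.Profile) (hβ : G.IsBehProfile β)
    (i : Fin G.n) (rest : List ℕ) :
    ∀ pre : List ℕ, pre ++ rest ∈ G.H → 0 ≤ G.prodAlongNot i β pre rest := by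
  induction rest with
  | nil => intro pre _; simp [EFG.prodAlongNot]
  | cons b rest ih =>
    intro pre h
    have h' : (pre ++ [b]) ++ rest ∈ G.H := by simpa using h
    unfold EFG.prodAlongNot
    refine mul_nonneg ?_ (ih _ h')
    split_ifs
    · exact zero_le_one
    · exact G.moveProb_nonneg β hβ pre b (G.prefixClosed _ h' _ (List.prefix_append _ _))

theorem EFG.prodAlongNot_append (G : EFG) (β : G.Profile) (i : Fin G.n) (l l' : List ℕ) :
    ∀ pre : List ℕ, G.prodAlongNot i β pre (l ++ l') =
      G.prodAlongNot i β pre l * G.prodAlongNot i β (pre ++ l) l' := by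
  induction l with
  | nil => intro pre; simp [EFG.prodAlongNot]
  | cons b l ih =>
    intro pre
    simp [EFG.prodAlongNot, ih, mul_assoc]

theorem EFG.Sh_nonneg (G : EFG) (β : G.Profile) (hβ : G.IsBehProfile β)
    (i : Fin G.n) (h : List ℕ) (hh : h ∈ G.H) : 0 ≤ G.Sh i β h :=
  G.prodAlongNot_nonneg β hβ i h [] (by simpa using hh)

theorem EFG.Sh_info_nonneg (G : EFG) (β : G.Profile) (hβ : G.IsBehProfile β)
    (i : Fin G.n) (j : ℕ) (hj : j < G.m i) : ∀ h ∈ G.Info i j, 0 ≤ G.Sh i β h :=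
  fun h hh => G.Sh_nonneg β hβ i h ((G.info_spec i j h hj).1 hh).1

theorem EFG.SInfo_pos_of (G : EFG) (β : G.Profile) (hβ : G.IsBehProfile β)
    (i : Fin G.n) (j : ℕ) (hj : j < G.m i) (q : ℕ) (hq : G.MInfo i j q)
    (hpos : 0 < G.SInfo i q β) : 0 < G.SInfo i j β := by
  obtain ⟨a, ha, hqm, hfirst⟩ := hq
  obtain ⟨h, hh, hne⟩ := Finset.exists_ne_zero_of_sum_ne_zero (ne_of_gt hpos)
  obtain ⟨l₁, l₂, rfl, -⟩ := hfirst h hh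
  have hH := ((G.info_spec i q _ hqm).1 hh).1
  have h1a : l₁ ++ [a] ∈ G.H := G.prefixClosed _ hH _ ⟨l₂, by simp⟩
  have h1 : l₁ ∈ G.H := G.prefixClosed _ h1a _ (List.prefix_append _ _)
  unfold EFG.infoA at ha
  rw [Finset.mem_sup] at ha
  obtain ⟨h', hh', ha'⟩ := ha
  have h'a := (Finset.mem_filter.1 ha').2
  obtain ⟨hH', hP', -, hI'⟩ := (G.info_spec i j _ hj).1 hh'
  obtain ⟨e1, e2⟩ := G.act_unique l₁ h' a h1 hH' h1a h'a
  have hmem : l₁ ∈ G.Info i j :=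
    (G.info_spec i j _ hj).2 ⟨h1, e1.trans hP', ⟨a, h1a⟩, e2.trans hI'⟩
  have hne1 : G.Sh i β l₁ ≠ 0 := by
    intro h0
    apply hne
    unfold EFG.Sh at h0 ⊢
    rw [EFG.prodAlongNot_append, h0, zero_mul]
  exact Finset.sum_pos' (G.Sh_info_nonneg β hβ i j hj)
    ⟨l₁, hmem, lt_of_le_of_ne (G.Sh_nonneg β hβ i l₁ h1) (Ne.symm hne1)⟩

/-- Lemma 1 (i)–(ii): if some first subsequent information set `I_i^q`, `q ∈ M(I_i^j)`, has
`S^i(I_i^q|β) > 0` then `S^i(I_i^j|β) > 0`; and if `S^i(I_i^j|β) = 0` then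
`S^i(I_i^q|β) = 0` for all `q ∈ M(I_i^j)`. -/
theorem stmt0 (G : EFG) (hPR : G.PerfectRecall)
    (β : G.Profile) (hβ : G.IsBehProfile β)
    (i : Fin G.n) (j : ℕ) (hj : j < G.m i) :
    ((∃ q, G.MInfo i j q ∧ 0 < G.SInfo i q β) → 0 < G.SInfo i j β) ∧
    (G.SInfo i j β = 0 → ∀ q, G.MInfo i j q → G.SInfo i q β = 0) := by
  refine ⟨fun ⟨q, hq, hpos⟩ => G.SInfo_pos_of β hβ i j hj q hq hpos, fun h0 q hq => ?_⟩
  by_contra hne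
  have hqm : q < G.m i := by
    obtain ⟨a, -, h, -⟩ := hq
    exact h
  have hnn : 0 ≤ G.SInfo i q β := Finset.sum_nonneg (G.Sh_info_nonneg β hβ i q hqm)
  exact absurd (G.SInfo_pos_of β hβ i j hj q hq (lt_of_le_of_ne hnn (Ne.symm hne)))
    (by rw [h0]; exact lt_irrefl _)
end
end

section
/- Let Γ be a finite extensive-form game with perfect recall. If behavioral strategy profiles β*, β̃* and a belief system μ* are such that (β*, β̃*, μ*) satisfies the Nash characterization, then β* is a Nash equilibrium in behavioral strategies, i.e. u^i(β*) ≥ u^i(β^i, β*^{-i}) for every player i ∈ N and every behavioral strategy β^i of player i. -/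
open scoped Classical

noncomputable section

namespace EFG

theorem recordFrom_append (G : EFG) (i : Fin G.n) (l₁ : List ℕ) : ∀ (pre l₂ : List ℕ),
    G.recordFrom i pre (l₁ ++ l₂) = G.recordFrom i pre l₁ ++ G.recordFrom i (pre ++ l₁) l₂ := by
  induction l₁ with
  | nil => intro pre l₂; simp [recordFrom]
  | cons b r ih => intro pre l₂; simp [recordFrom, ih, List.append_assoc]

theorem prodAlong_append (G : EFG) (β : G.Profile) (l₁ : List ℕ) : ∀ (pre l₂ : List ℕ),
    G.prodAlong β pre (l₁ ++ l₂) = G.prodAlong β pre l₁ * G.prodAlong β (pre ++ l₁) l₂ := by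
  induction l₁ with
  | nil => intro pre l₂; simp [prodAlong]
  | cons b r ih => intro pre l₂; simp [prodAlong, ih, List.append_assoc, mul_assoc]

theorem prodAlongSkip_append (G : EFG) (i : Fin G.n) (j : ℕ) (β : G.Profile) (l₁ : List ℕ) :
    ∀ (pre l₂ : List ℕ), G.prodAlongSkip i j β pre (l₁ ++ l₂) =
      G.prodAlongSkip i j β pre l₁ * G.prodAlongSkip i j β (pre ++ l₁) l₂ := by
  induction l₁ with
  | nil => intro pre l₂; simp [prodAlongSkip]
  | cons b r ih =>
    intro pre l₂
    simp only [List.cons_append, prodAlongSkip, ih, List.append_assoc, mul_assoc,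
      List.nil_append]

theorem prodAlongSkip_eq (G : EFG) (i : Fin G.n) (j : ℕ) (β γ : G.Profile) (l : List ℕ) :
    ∀ (pre : List ℕ), (∀ l₁ c l₂, l = l₁ ++ c :: l₂ → pre ++ l₁ ∉ G.Info i j ∧
      G.moveProb β (pre ++ l₁) c = G.moveProb γ (pre ++ l₁) c) →
      G.prodAlongSkip i j β pre l = G.prodAlong γ pre l := by
  induction l with
  | nil => intro pre _; simp [prodAlong, prodAlongSkip]
  | cons b r ih =>
    intro pre h
    have h0 := h [] b r rfl
    simp only [List.append_nil] at h0
    simp only [prodAlongSkip, prodAlong, h0.1, if_false, h0.2]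
    rw [ih (pre ++ [b])]
    intro l₁ c l₂ e
    have := h (b :: l₁) c l₂ (by simp [e])
    simpa using this

theorem prodAlong_eq (G : EFG) (β γ : G.Profile) (l : List ℕ) :
    ∀ (pre : List ℕ), (∀ l₁ c l₂, l = l₁ ++ c :: l₂ →
      G.moveProb β (pre ++ l₁) c = G.moveProb γ (pre ++ l₁) c) →
      G.prodAlong β pre l = G.prodAlong γ pre l := by
  induction l with
  | nil => intro pre _; simp [prodAlong]
  | cons b r ih =>
    intro pre h
    have h0 := h [] b r rfl
    simp only [List.append_nil] at h0
    simp only [prodAlong, h0]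
    rw [ih (pre ++ [b])]
    intro l₁ c l₂ e
    have := h (b :: l₁) c l₂ (by simp [e])
    simpa using this

theorem nuAux_eq (G : EFG) (i : Fin G.n) (j : ℕ) (β : G.Profile) (w : List ℕ → ℝ)
    (l : List ℕ) : ∀ (pre : List ℕ) (a : ℕ) (r : List ℕ),
      (∀ l₁ c l₂, l = l₁ ++ c :: l₂ → pre ++ l₁ ∉ G.Info i j) → pre ++ l ∈ G.Info i j →
      G.nuAux i j β w pre (l ++ a :: r) =
        w (pre ++ l) * G.prodAlong β (pre ++ l ++ [a]) r := by
  induction l with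
  | nil => intro pre a r _ h; simp at h; simp [nuAux, h]
  | cons b s ih =>
    intro pre a r h hm
    have h0 := h [] b s rfl
    simp only [List.append_nil] at h0
    simp only [List.cons_append, nuAux, h0, if_false]
    rw [ih (pre ++ [b])]
    · simp
    · intro l₁ c l₂ e
      have := h (b :: l₁) c l₂ (by simp [e])
      simpa using this
    · simpa using hm

/-- Own realization weight of a record. -/
def ownW (b : ℕ → ℕ → ℝ) (r : List (ℕ × ℕ)) : ℝ := (r.map fun x => b x.1 x.2).prod

theorem moveProb_replace_self (G : EFG) (β : G.Profile) (i : Fin G.n) (b : ℕ → ℕ → ℝ)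
    (h : List ℕ) (a : ℕ) (hp : G.P h = some i) :
    G.moveProb (G.replace β i b) h a = b (G.infoIdx h) a := by
  simp [moveProb, hp, replace]

theorem moveProb_replace_other (G : EFG) (β : G.Profile) (i : Fin G.n) (b : ℕ → ℕ → ℝ)
    (h : List ℕ) (a : ℕ) (hp : G.P h ≠ some i) :
    G.moveProb (G.replace β i b) h a = G.moveProb β h a := by
  unfold moveProb
  cases hq : G.P h with
  | none => rfl
  | some p =>
    have : p ≠ i := fun e => hp (by rw [hq, e])
    simp [replace, this]

theorem prodAlong_factor (G : EFG) (β : G.Profile) (i : Fin G.n) (b : ℕ → ℕ → ℝ)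
    (l : List ℕ) : ∀ pre : List ℕ, G.prodAlong (G.replace β i b) pre l =
      ownW b (G.recordFrom i pre l) * G.prodAlongNot i β pre l := by
  induction l with
  | nil => intro pre; simp [prodAlong, prodAlongNot, ownW, recordFrom]
  | cons c r ih =>
    intro pre
    simp only [prodAlong, prodAlongNot, recordFrom, ih]
    by_cases hp : G.P pre = some i
    · simp [hp, moveProb_replace_self, ownW, mul_assoc]
    · simp [hp, moveProb_replace_other, ownW]; ring

theorem replace_self (G : EFG) (β : G.Profile) (i : Fin G.n) :
    G.replace β i (β i) = β := by
  funext p; unfold replace; split_ifs with h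
  · rw [h]
  · rfl

theorem mem_A (G : EFG) (h : List ℕ) (a : ℕ) : a ∈ G.A h ↔ h ++ [a] ∈ G.H := by
  simp only [A, Finset.mem_filter]
  exact ⟨fun x => x.2, fun x => ⟨G.act_mem _ _ x, x⟩⟩

theorem A_eq (G : EFG) (i : Fin G.n) (j : ℕ) (hj : j < G.m i) (h : List ℕ)
    (hh : h ∈ G.Info i j) : G.A h = G.infoA i j := by
  ext a
  simp only [infoA, Finset.mem_sup]
  constructor
  · intro ha; exact ⟨h, hh, ha⟩
  · rintro ⟨g, hg, ha⟩
    rw [mem_A] at *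
    exact (G.info_actions i j hj h hh g hg a).2 ha

theorem mem_info (G : EFG) (i : Fin G.n) (h : List ℕ) (a : ℕ) (ha : h ++ [a] ∈ G.H)
    (hp : G.P h = some i) : G.infoIdx h < G.m i ∧ h ∈ G.Info i (G.infoIdx h) := by
  have hH : h ∈ G.H := G.prefixClosed _ ha _ ⟨[a], rfl⟩
  have := G.infoIdx_lt i h hH hp ⟨a, ha⟩
  exact ⟨this, (G.info_spec i _ h this).2 ⟨hH, hp, ⟨a, ha⟩, rfl⟩⟩

/-- An action of `A(I)` is only available at histories in `I`. -/
theorem mem_info_of_act (G : EFG) (i : Fin G.n) (j : ℕ) (hj : j < G.m i) (h : List ℕ) (a : ℕ)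
    (ha : h ++ [a] ∈ G.H) (haj : a ∈ G.infoA i j) : h ∈ G.Info i j := by
  have hH : h ∈ G.H := G.prefixClosed _ ha _ ⟨[a], rfl⟩
  obtain ⟨g, hg⟩ := G.info_nonempty i j hj
  rw [← G.A_eq i j hj g hg, mem_A] at haj
  obtain ⟨gH, gP, _, gI⟩ := (G.info_spec i j g hj).1 hg
  have := G.act_unique h g a hH gH ha haj
  exact (G.info_spec i j h hj).2 ⟨hH, this.1.trans gP, ⟨a, ha⟩, this.2.trans gI⟩

theorem mem_record (G : EFG) (i : Fin G.n) (l : List ℕ) : ∀ (pre : List ℕ) (q c : ℕ),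
    (q, c) ∈ G.recordFrom i pre l ↔ ∃ l₁ l₂, l = l₁ ++ c :: l₂ ∧ G.P (pre ++ l₁) = some i ∧
      G.infoIdx (pre ++ l₁) = q := by
  induction l with
  | nil => intro pre q c; simp [recordFrom]
  | cons b r ih =>
    intro pre q c
    simp only [recordFrom, List.mem_append, ih]
    constructor
    · rintro (h | ⟨l₁, l₂, e, h⟩)
      · split_ifs at h with hp
        · simp at h
          exact ⟨[], r, by simp [h.2], by simpa using hp, by simp [h.1]⟩
        · simp at h
      · exact ⟨b :: l₁, l₂, by simp [e], by simpa using h⟩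
    · rintro ⟨l₁, l₂, e, h1, h2⟩
      cases l₁ with
      | nil =>
        simp at e h1 h2
        left; simp [h1, h2, e.1]
      | cons d s =>
        simp at e
        right
        exact ⟨s, l₂, e.2, by simpa [e.1] using h1, by simpa [e.1] using h2⟩

theorem info_once (G : EFG) (hPR : G.PerfectRecall) (i : Fin G.n) (j : ℕ) (hj : j < G.m i)
    (h : List ℕ) (hh : h ∈ G.Info i j) (r : List ℕ) (hr : h ++ r ∈ G.Info i j) : r = [] := by
  cases r with
  | nil => rfl
  | cons c r =>
    have e := hPR i j hj _ hr _ hh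
    have hp := ((G.info_spec i j h hj).1 hh).2.1
    have e2 := congrArg List.length e
    simp [recordFrom_append, recordFrom, hp] at e2

theorem no_act_before (G : EFG) (hPR : G.PerfectRecall) (i : Fin G.n) (j q : ℕ)
    (hj : j < G.m i) (hq : q < G.m i) (p r : List ℕ) (hp : p ∈ G.Info i q)
    (hh : p ++ r ∈ G.Info i j) (g : List ℕ) (hg : g ∈ G.Info i q) (b : ℕ) (hb : b ∈ g)
    (hbj : b ∈ G.infoA i j) : False := by
  obtain ⟨l₁, l₂, rfl⟩ := List.append_of_mem hb
  have gH := ((G.info_spec i q _ hq).1 hg).1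
  have h1 : l₁ ++ [b] ∈ G.H := G.prefixClosed _ gH _ ⟨l₂, by simp⟩
  have h2 := G.mem_info_of_act i j hj l₁ b h1 hbj
  obtain ⟨_, h3, _, h4⟩ := (G.info_spec i j _ hj).1 h2
  have h5 : (j, b) ∈ G.recordFrom i [] p := by
    rw [hPR i q hq p hp _ hg, mem_record]
    exact ⟨l₁, l₂, rfl, by simpa using h3, by simpa using h4⟩
  rw [mem_record] at h5
  obtain ⟨k₁, k₂, rfl, _, _⟩ := h5
  have pH := ((G.info_spec i q _ hq).1 hp).1
  have h6 : k₁ ++ [b] ∈ G.H := G.prefixClosed _ pH _ ⟨k₂, by simp⟩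
  have h7 := G.mem_info_of_act i j hj k₁ b h6 hbj
  have := G.info_once hPR i j hj k₁ h7 (b :: k₂ ++ r) (by simpa using hh)
  simp at this

theorem moveProb_rho_before (G : EFG) (hPR : G.PerfectRecall) (i : Fin G.n) (j : ℕ)
    (hj : j < G.m i) (β βt : G.Profile) (p r : List ℕ) (c : ℕ)
    (hh : p ++ c :: r ∈ G.Info i j) :
    G.moveProb (G.rho i j β βt) p c = G.moveProb β p c := by
  unfold moveProb
  cases hq : G.P p with
  | none => rfl
  | some k =>
    simp only [Option.elim, rho]
    rw [if_neg]
    rintro ⟨rfl, g, hg, b, hb, hbj⟩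
    have hH := ((G.info_spec k j _ hj).1 hh).1
    have h1 : p ++ [c] ∈ G.H := G.prefixClosed _ hH _ ⟨r, by simp⟩
    obtain ⟨h2, h3⟩ := G.mem_info k p c h1 hq
    exact G.no_act_before hPR k j _ hj h2 p (c :: r) h3 hh g hg b hb hbj

theorem moveProb_rho_after (G : EFG) (i : Fin G.n) (j : ℕ)
    (β βt : G.Profile) (p : List ℕ) (c : ℕ) (hp : p ++ [c] ∈ G.H)
    (a : ℕ) (ha : a ∈ p) (haj : a ∈ G.infoA i j) :
    G.moveProb (G.rho i j β βt) p c = G.moveProb (G.replace β i (βt i)) p c := by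
  unfold moveProb
  cases hq : G.P p with
  | none => rfl
  | some k =>
    simp only [Option.elim, rho, replace]
    by_cases hk : k = i
    · subst hk
      obtain ⟨h2, h3⟩ := G.mem_info k p c hp hq
      rw [if_pos ⟨rfl, p, h3, a, ha, haj⟩, if_pos rfl]
    · simp [hk]

theorem skip_eval (G : EFG) (hPR : G.PerfectRecall) (i : Fin G.n) (j : ℕ)
    (hj : j < G.m i) (β βt : G.Profile) (h : List ℕ) (hh : h ∈ G.Info i j) (a : ℕ)
    (haj : a ∈ G.infoA i j) (r : List ℕ) (hH : h ++ a :: r ∈ G.H) :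
    G.prodAlongSkip i j (G.rho i j β βt) [] (h ++ a :: r) =
      G.omega β h * G.prodAlong (G.replace β i (βt i)) (h ++ [a]) r := by
  rw [prodAlongSkip_append]
  congr 1
  · apply prodAlongSkip_eq
    rintro l₁ c l₂ rfl
    refine ⟨fun hm => ?_, G.moveProb_rho_before hPR i j hj β βt _ l₂ c (by simpa using hh)⟩
    have := G.info_once hPR i j hj _ hm (c :: l₂) (by simpa using hh)
    simp at this
  · simp only [prodAlongSkip, List.nil_append, hh, if_true, one_mul]
    apply prodAlongSkip_eq
    rintro l₁ c l₂ rfl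
    refine ⟨fun hm => ?_, G.moveProb_rho_after i j β βt _ c
      (G.prefixClosed _ hH _ ⟨l₂, by simp⟩) a (by simp) haj⟩
    have := G.info_once hPR i j hj _ hh (a :: l₁) (by simpa using hm)
    simp at this

theorem nu_eval (G : EFG) (hPR : G.PerfectRecall) (i : Fin G.n) (j : ℕ)
    (hj : j < G.m i) (β βt : G.Profile) (μ : G.Belief) (h : List ℕ) (hh : h ∈ G.Info i j)
    (a : ℕ) (haj : a ∈ G.infoA i j) (r : List ℕ) (hH : h ++ a :: r ∈ G.H) :
    G.nu i j (G.rho i j β βt) μ (h ++ a :: r) =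
      μ i j h * G.prodAlong (G.replace β i (βt i)) (h ++ [a]) r := by
  unfold nu
  rw [nuAux_eq]
  · simp only [List.nil_append]
    congr 1
    apply prodAlong_eq
    rintro l₁ c l₂ rfl
    exact G.moveProb_rho_after i j β βt _ c
      (G.prefixClosed _ hH _ ⟨l₂, by simp⟩) a (by simp) haj
  · rintro l₁ c l₂ rfl hm
    have := G.info_once hPR i j hj _ hm (c :: l₂) (by simpa using hh)
    simp at this
  · simpa using hh

theorem sum_act (G : EFG) (hPR : G.PerfectRecall) (i : Fin G.n) (j : ℕ)
    (hj : j < G.m i) (a : ℕ) (haj : a ∈ G.infoA i j) (f : List ℕ → ℝ) :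
    ∑ z ∈ G.Zset.filter (fun z => a ∈ z), f z =
      ∑ h ∈ G.Info i j, ∑ z ∈ G.Zset.filter (fun z => h ++ [a] <+: z), f z := by
  simp only [Finset.sum_filter]
  rw [Finset.sum_comm]
  refine Finset.sum_congr rfl fun z hz => ?_
  have zH : z ∈ G.H := (Finset.mem_filter.1 hz).1
  by_cases hb : a ∈ z
  · obtain ⟨l₁, l₂, rfl⟩ := List.append_of_mem hb
    have h1 := G.mem_info_of_act i j hj l₁ a (G.prefixClosed _ zH _ ⟨l₂, by simp⟩) haj
    rw [Finset.sum_eq_single_of_mem l₁ h1]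
    · rw [if_pos hb, if_pos ⟨l₂, by simp⟩]
    · intro g hg hne
      rw [if_neg]
      intro hpre
      have e1 : g <+: l₁ ++ a :: l₂ := (List.prefix_append g [a]).trans hpre
      rcases List.prefix_or_prefix_of_prefix e1 (List.prefix_append l₁ (a :: l₂)) with
        ⟨t, rfl⟩ | ⟨t, rfl⟩
      · have := G.info_once hPR i j hj _ hg _ h1
        simp [this] at hne
      · have := G.info_once hPR i j hj _ h1 _ hg
        simp [this] at hne
  · rw [if_neg hb]
    symm
    apply Finset.sum_eq_zero
    intro g _
    rw [if_neg]
    rintro ⟨t, rfl⟩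
    simp at hb

/-- The counterfactual value of action `a` at `I_i^j`. -/
def cfV (G : EFG) (i : Fin G.n) (β σ : G.Profile) (j a : ℕ) : ℝ :=
  ∑ h ∈ G.Info i j, G.Sh i β h * G.uExpFrom i σ (h ++ [a])

theorem uWedgeAct_eq (G : EFG) (hPR : G.PerfectRecall) (i : Fin G.n) (j : ℕ)
    (hj : j < G.m i) (β βt : G.Profile) (a : ℕ) (haj : a ∈ G.infoA i j)
    (g : List ℕ) (hg : g ∈ G.Info i j) :
    G.uWedgeAct i j a (G.rho i j β βt) =
      ownW (β i) (G.recordFrom i [] g) * G.cfV i β (G.replace β i (βt i)) j a := by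
  unfold uWedgeAct cfV
  rw [G.sum_act hPR i j hj a haj, Finset.mul_sum]
  refine Finset.sum_congr rfl fun h hh => ?_
  unfold uExpFrom
  simp only [Finset.mul_sum]
  refine Finset.sum_congr rfl fun z hz => ?_
  obtain ⟨hz, ⟨r, rfl⟩⟩ := Finset.mem_filter.1 hz
  have zH := (Finset.mem_filter.1 hz).1
  have e : h ++ [a] ++ r = h ++ a :: r := by simp
  rw [List.drop_left]
  rw [e] at zH ⊢
  rw [G.skip_eval hPR i j hj β βt h hh a haj r zH, hPR i j hj g hg h hh]
  have := G.prodAlong_factor β i (β i) h []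
  rw [replace_self] at this
  unfold omega Sh
  rw [this]; ring

theorem uCond_eq (G : EFG) (hPR : G.PerfectRecall) (i : Fin G.n) (j : ℕ)
    (hj : j < G.m i) (β βt : G.Profile) (μ : G.Belief) (hμ : G.SelfIndep β μ)
    (a : ℕ) (haj : a ∈ G.infoA i j) :
    G.SInfo i j β * G.uCond i j a (G.rho i j β βt) μ =
      G.cfV i β (G.replace β i (βt i)) j a := by
  unfold uCond cfV
  rw [G.sum_act hPR i j hj a haj, Finset.mul_sum]
  refine Finset.sum_congr rfl fun h hh => ?_
  unfold uExpFrom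
  simp only [Finset.mul_sum]
  refine Finset.sum_congr rfl fun z hz => ?_
  obtain ⟨hz, ⟨r, rfl⟩⟩ := Finset.mem_filter.1 hz
  have zH := (Finset.mem_filter.1 hz).1
  have e : h ++ [a] ++ r = h ++ a :: r := by simp
  rw [List.drop_left]
  rw [e] at zH ⊢
  rw [G.nu_eval hPR i j hj β βt μ h hh a haj r zH, ← hμ i j hj h hh]
  ring

theorem uExpFrom_rec (G : EFG) (i : Fin G.n) (σ : G.Profile) (h : List ℕ) :
    G.uExpFrom i σ h = (if h ∈ G.Zset then G.u i h else 0) +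
      ∑ a ∈ G.A h, G.moveProb σ h a * G.uExpFrom i σ (h ++ [a]) := by
  unfold uExpFrom
  simp only [Finset.sum_filter, Finset.mul_sum]
  rw [Finset.sum_comm]
  have : (if h ∈ G.Zset then G.u i h else 0) = ∑ z ∈ G.Zset, if h = z then G.u i z else 0 := by
    rw [Finset.sum_ite_eq]
  rw [this, ← Finset.sum_add_distrib]
  refine Finset.sum_congr rfl fun z hz => ?_
  have zH : z ∈ G.H := (Finset.mem_filter.1 hz).1
  by_cases hp : h <+: z
  · obtain ⟨r, rfl⟩ := hp
    cases r with
    | nil =>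
      have hn : ∀ x : ℕ, ¬ h ++ [x] <+: h := fun x hx => by
        have := hx.length_le
        simp at this
      simp [prodAlong, hn]
    | cons c r =>
      have hc : c ∈ G.A h := (G.mem_A h c).2 (G.prefixClosed _ zH _ ⟨r, by simp⟩)
      rw [Finset.sum_eq_single_of_mem c hc]
      · have e : h ++ c :: r = h ++ [c] ++ r := by simp
        have e2 : h ++ [c] <+: h ++ c :: r := ⟨r, by simp⟩
        have e3 : (h ++ c :: r).drop (h ++ [c]).length = r := by rw [e, List.drop_left]
        rw [if_pos (List.prefix_append _ _), if_pos e2, e3, List.drop_left]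
        simp [prodAlong]; ring
      · intro d _ hd
        have : ¬ h ++ [d] <+: h ++ c :: r := by
          rw [List.prefix_append_right_inj]
          simp [hd]
        rw [if_neg this, mul_zero]
  · rw [if_neg hp, if_neg (by rintro rfl; exact hp List.prefix_rfl), zero_add]
    symm
    apply Finset.sum_eq_zero
    intro a _
    rw [if_neg (fun x => hp ((List.prefix_append h [a]).trans x)), mul_zero]

theorem sum_succ (G : EFG) (f : List ℕ → ℝ) :
    ∑ h ∈ G.H, ∑ a ∈ G.A h, f (h ++ [a]) = ∑ g ∈ G.H.erase [], f g := by
  rw [Finset.sum_sigma']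
  refine Finset.sum_bij (fun x _ => x.1 ++ [x.2]) ?_ ?_ ?_ ?_
  · rintro ⟨h, a⟩ hx
    simp only [Finset.mem_sigma, mem_A] at hx
    simp [hx.2]
  · rintro ⟨h, a⟩ _ ⟨h', a'⟩ _ e
    have := List.append_inj' e rfl
    simp at this
    simp [this]
  · intro g hg
    obtain ⟨hne, hH⟩ := Finset.mem_erase.1 hg
    refine ⟨⟨g.dropLast, g.getLast hne⟩, ?_, List.dropLast_append_getLast hne⟩
    simp only [Finset.mem_sigma, mem_A, List.dropLast_append_getLast]
    exact ⟨G.prefixClosed _ hH _ (List.dropLast_prefix g), hH⟩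
  · intros; rfl

theorem perf_diff (G : EFG) (i : Fin G.n) (τ σ : G.Profile) :
    G.uExp i τ - G.uExpFrom i σ [] = ∑ h ∈ G.H, G.omega τ h *
      ∑ a ∈ G.A h, (G.moveProb τ h a - G.moveProb σ h a) * G.uExpFrom i σ (h ++ [a]) := by
  have h1 : ∀ h ∈ G.H, G.omega τ h *
      ∑ a ∈ G.A h, (G.moveProb τ h a - G.moveProb σ h a) * G.uExpFrom i σ (h ++ [a]) =
      ∑ a ∈ G.A h, G.omega τ (h ++ [a]) * G.uExpFrom i σ (h ++ [a]) -
        G.omega τ h * G.uExpFrom i σ h +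
        (if h ∈ G.Zset then G.u i h * G.omega τ h else 0) := by
    intro h _
    have e1 : ∀ a, G.omega τ (h ++ [a]) = G.omega τ h * G.moveProb τ h a := by
      intro a; simp [omega, prodAlong_append, prodAlong]
    have e2 := G.uExpFrom_rec i σ h
    have e3 : (if h ∈ G.Zset then G.u i h * G.omega τ h else 0) =
      (if h ∈ G.Zset then G.u i h else 0) * G.omega τ h := by split_ifs <;> simp
    rw [e3, e2]
    simp only [e1, sub_mul, Finset.sum_sub_distrib, mul_assoc, ← Finset.mul_sum]
    ring
  rw [Finset.sum_congr rfl h1, Finset.sum_add_distrib, Finset.sum_sub_distrib,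
    G.sum_succ (fun g => G.omega τ g * G.uExpFrom i σ g), ← Finset.sum_filter,
    ← Finset.add_sum_erase G.H _ G.empty_mem]
  have : G.H.filter (fun h => h ∈ G.Zset) = G.Zset := by
    ext h; simp [Zset]
  rw [this]
  simp only [uExp, omega, prodAlong]
  ring

theorem sum_player (G : EFG) (i : Fin G.n) (f : List ℕ → ℝ)
    (hf : ∀ h ∈ G.H, (G.P h ≠ some i ∨ ∀ a, h ++ [a] ∉ G.H) → f h = 0) :
    ∑ h ∈ G.H, f h = ∑ j ∈ Finset.range (G.m i), ∑ h ∈ G.Info i j, f h := by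
  have : ∀ j ∈ Finset.range (G.m i), ∑ h ∈ G.Info i j, f h =
      ∑ h ∈ G.H, if h ∈ G.Info i j then f h else 0 := by
    intro j hj
    rw [← Finset.sum_filter]
    congr 1
    ext h
    simp only [Finset.mem_filter]
    exact ⟨fun x => ⟨((G.info_spec i j h (Finset.mem_range.1 hj)).1 x).1, x⟩, fun x => x.2⟩
  rw [Finset.sum_congr rfl this, Finset.sum_comm]
  refine Finset.sum_congr rfl fun h hh => ?_
  by_cases hc : G.P h ≠ some i ∨ ∀ a, h ++ [a] ∉ G.H
  · rw [hf h hh hc]; simp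
  · push Not at hc
    obtain ⟨hP, a, ha⟩ := hc
    obtain ⟨h1, h2⟩ := G.mem_info i h a ha hP
    rw [Finset.sum_eq_single_of_mem _ (Finset.mem_range.2 h1), if_pos h2]
    intro j hj hne
    rw [if_neg]
    intro hm
    exact hne ((G.info_spec i j h (Finset.mem_range.1 hj)).1 hm).2.2.2.symm

theorem perf_diff_info (G : EFG) (hPR : G.PerfectRecall) (i : Fin G.n) (β : G.Profile)
    (b bt : ℕ → ℕ → ℝ) (rep : ℕ → List ℕ) (hrep : ∀ j < G.m i, rep j ∈ G.Info i j) :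
    G.uExp i (G.replace β i b) - G.uExpFrom i (G.replace β i bt) [] =
      ∑ j ∈ Finset.range (G.m i), ownW b (G.recordFrom i [] (rep j)) *
        ∑ a ∈ G.infoA i j, (b j a - bt j a) * G.cfV i β (G.replace β i bt) j a := by
  rw [perf_diff, G.sum_player i]
  · refine Finset.sum_congr rfl fun j hj => ?_
    have hj := Finset.mem_range.1 hj
    simp only [cfV, Finset.mul_sum]
    have : ∀ h ∈ G.Info i j, ∀ a, G.omega (G.replace β i b) h *
        ((G.moveProb (G.replace β i b) h a - G.moveProb (G.replace β i bt) h a) *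
          G.uExpFrom i (G.replace β i bt) (h ++ [a])) =
        ownW b (G.recordFrom i [] (rep j)) * ((b j a - bt j a) *
          (G.Sh i β h * G.uExpFrom i (G.replace β i bt) (h ++ [a]))) := by
      intro h hh a
      obtain ⟨_, hP, _, hI⟩ := (G.info_spec i j h hj).1 hh
      rw [moveProb_replace_self _ _ _ _ _ _ hP, moveProb_replace_self _ _ _ _ _ _ hP, hI,
        hPR i j hj _ (hrep j hj) h hh]
      unfold omega Sh
      rw [prodAlong_factor]
      ring
    refine Eq.trans ?_ Finset.sum_comm
    refine Finset.sum_congr rfl fun h hh => ?_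
    rw [G.A_eq i j hj h hh]
    exact Finset.sum_congr rfl fun a _ => this h hh a
  · rintro h _ (hP | hZ)
    · simp [moveProb_replace_other _ _ _ _ _ _ hP]
    · have : G.A h = ∅ := by
        ext a; simp [mem_A, hZ a]
      simp [this]

theorem ownW_nonneg (G : EFG) (i : Fin G.n) (b : ℕ → ℕ → ℝ) (hb : G.IsBehStrategy i b)
    (h : List ℕ) (hH : h ∈ G.H) : 0 ≤ ownW b (G.recordFrom i [] h) := by
  apply List.prod_nonneg
  intro x hx
  obtain ⟨⟨q, c⟩, hm, rfl⟩ := List.mem_map.1 hx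
  obtain ⟨l₁, l₂, rfl, h1, h2⟩ := (G.mem_record i h [] q c).1 hm
  simp only [List.nil_append] at h1 h2
  have h3 : l₁ ++ [c] ∈ G.H := G.prefixClosed _ hH _ ⟨l₂, by simp⟩
  obtain ⟨h4, h5⟩ := G.mem_info i l₁ c h3 h1
  rw [h2] at h4 h5
  refine (hb q h4).1 c ?_
  rw [← G.A_eq i q h4 l₁ h5, mem_A]
  exact h3

theorem moveProb_nonneg_s3 (G : EFG) (β : G.Profile) (hβ : G.IsBehProfile β) (h : List ℕ) (a : ℕ)
    (ha : h ++ [a] ∈ G.H) : 0 ≤ G.moveProb β h a := by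
  unfold moveProb
  cases hq : G.P h with
  | none => exact G.fc_nonneg _ _
  | some k =>
    obtain ⟨h4, h5⟩ := G.mem_info k h a ha hq
    refine (hβ k _ h4).1 a ?_
    rw [← G.A_eq k _ h4 h h5, mem_A]
    exact ha

theorem prodAlongNot_nonneg_s3 (G : EFG) (i : Fin G.n) (β : G.Profile) (hβ : G.IsBehProfile β)
    (l : List ℕ) : ∀ pre : List ℕ, pre ++ l ∈ G.H → 0 ≤ G.prodAlongNot i β pre l := by
  induction l with
  | nil => intro pre _; simp [prodAlongNot]
  | cons c r ih =>
    intro pre hH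
    refine mul_nonneg ?_ (ih _ (by simpa using hH))
    split_ifs
    · exact zero_le_one
    · exact G.moveProb_nonneg_s3 β hβ _ _ (G.prefixClosed _ hH _ ⟨r, by simp⟩)

theorem SInfo_nonneg (G : EFG) (i : Fin G.n) (j : ℕ) (hj : j < G.m i) (β : G.Profile)
    (hβ : G.IsBehProfile β) : 0 ≤ G.SInfo i j β :=
  Finset.sum_nonneg fun h hh => G.prodAlongNot_nonneg_s3 i β hβ h []
    (by simpa using ((G.info_spec i j h hj).1 hh).1)

/-- A distribution supported on maximizers does at least as well as any distribution. -/
theorem sum_le_of_support (s : Finset ℕ) (p q V : ℕ → ℝ) (hp : ∀ a ∈ s, 0 ≤ p a)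
    (hp1 : ∑ a ∈ s, p a = 1) (hq : ∀ a ∈ s, 0 ≤ q a) (hq1 : ∑ a ∈ s, q a = 1)
    (hs : ∀ a' ∈ s, ∀ a'' ∈ s, V a' < V a'' → q a' = 0) :
    ∑ a ∈ s, p a * V a ≤ ∑ a ∈ s, q a * V a := by
  have hne : s.Nonempty := by
    rw [Finset.nonempty_iff_ne_empty]; rintro rfl; simp at hp1
  obtain ⟨m, hm, hmax⟩ := s.exists_max_image V hne
  have h1 : ∑ a ∈ s, p a * V a ≤ V m := by
    calc _ ≤ ∑ a ∈ s, p a * V m :=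
          Finset.sum_le_sum fun a ha => mul_le_mul_of_nonneg_left (hmax a ha) (hp a ha)
      _ = V m := by rw [← Finset.sum_mul, hp1, one_mul]
  have h2 : ∑ a ∈ s, q a * V a = V m := by
    calc _ = ∑ a ∈ s, q a * V m := by
          refine Finset.sum_congr rfl fun a ha => ?_
          rcases (hmax a ha).lt_or_eq with h | h
          · rw [hs a ha m hm h]; simp
          · rw [h]
      _ = V m := by rw [← Finset.sum_mul, hq1, one_mul]
  rw [h2]; exact h1

end EFG

/-- If `(β*, β̃*, μ*)` satisfies the Nash characterization, then `β*` is a Nash equilibrium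
in behavioral strategies. -/
theorem stmt3 (G : EFG) (hPR : G.PerfectRecall)
    (β βt : G.Profile) (μ : G.Belief)
    (hβ : G.IsBehProfile β) (hβt : G.IsBehProfile βt)
    (hchar : G.NashChar β βt μ) :
    ∀ (i : Fin G.n) (b : ℕ → ℕ → ℝ), G.IsBehStrategy i b →
      G.uExp i (G.replace β i b) ≤ G.uExp i β := by
  obtain ⟨c1, c2, _, hμ⟩ := hchar
  intro i b hb
  have hex : ∀ j, ∃ h, j < G.m i → h ∈ G.Info i j := by
    intro j
    by_cases hj : j < G.m i
    · obtain ⟨h, hh⟩ := G.info_nonempty i j hj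
      exact ⟨h, fun _ => hh⟩
    · exact ⟨[], fun h => absurd h hj⟩
  choose rep hrep using hex
  have hH : ∀ j < G.m i, rep j ∈ G.H := fun j hj =>
    ((G.info_spec i j _ hj).1 (hrep j hj)).1
  have d1 := G.perf_diff_info hPR i β b (βt i) rep hrep
  have d2 := G.perf_diff_info hPR i β (β i) (βt i) rep hrep
  rw [G.replace_self] at d2
  have hopt : ∀ j < G.m i, ∀ a' ∈ G.infoA i j, ∀ a'' ∈ G.infoA i j,
      G.cfV i β (G.replace β i (βt i)) j a' < G.cfV i β (G.replace β i (βt i)) j a'' →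
      βt i j a' = 0 := by
    intro j hj a' h' a'' h'' hlt
    refine c2 i j hj a' h' a'' h'' ?_
    rw [← G.uCond_eq hPR i j hj β βt μ hμ a' h',
      ← G.uCond_eq hPR i j hj β βt μ hμ a'' h''] at hlt
    exact lt_of_mul_lt_mul_left hlt (G.SInfo_nonneg i j hj β hβ)
  have e1 : G.uExp i (G.replace β i b) - G.uExpFrom i (G.replace β i (βt i)) [] ≤ 0 := by
    rw [d1]
    refine Finset.sum_nonpos fun j hj => ?_
    have hj := Finset.mem_range.1 hj
    refine mul_nonpos_of_nonneg_of_nonpos (G.ownW_nonneg i b hb _ (hH j hj)) ?_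
    simp only [sub_mul, Finset.sum_sub_distrib]
    rw [sub_nonpos]
    exact EFG.sum_le_of_support _ _ _ _ (hb j hj).1 (hb j hj).2 (hβt i j hj).1 (hβt i j hj).2
      (hopt j hj)
  have e2 : 0 ≤ G.uExp i β - G.uExpFrom i (G.replace β i (βt i)) [] := by
    rw [d2]
    refine Finset.sum_nonneg fun j hj => ?_
    have hj := Finset.mem_range.1 hj
    rcases (G.ownW_nonneg i (β i) (hβ i) _ (hH j hj)).eq_or_lt with h0 | hpos
    · rw [← h0, zero_mul]
    · refine mul_nonneg hpos.le ?_
      simp only [sub_mul, Finset.sum_sub_distrib]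
      rw [sub_nonneg]
      refine EFG.sum_le_of_support _ _ _ _ (hβt i j hj).1 (hβt i j hj).2 (hβ i j hj).1
        (hβ i j hj).2 ?_
      intro a' h' a'' h'' hlt
      refine c1 i j hj a' h' a'' h'' ?_
      rw [G.uWedgeAct_eq hPR i j hj β βt a' h' _ (hrep j hj),
        G.uWedgeAct_eq hPR i j hj β βt a'' h'' _ (hrep j hj)]
      exact mul_lt_mul_of_pos_left hlt hpos
  linarith
end
end

section
/- Every finite extensive-form game with perfect recall possesses a Nash equilibrium in behavioral strategies: there exists a behavioral strategy profile β* such that u^i(β*) ≥ u^i(β^i, β*^{-i}) for every player i ∈ N and every behavioral strategy β^i of player i. -/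
open scoped Classical

noncomputable section

set_option linter.unusedSectionVars false

namespace NashAux

/-- Scarf dominance: no point beats all of `S` in every order from `C`. -/
def Dom {X I Λ : Type*} [LinearOrder Λ] (v : I → X → Λ) (S : Finset X) (C : Finset I) : Prop :=
  ∀ x, ∃ i ∈ C, ∀ s ∈ S, v i x ≤ v i s

/-- Critical orders of a door. -/
def Crit {X I Λ : Type*} [LinearOrder Λ] (v : I → X → Λ) (S : Finset X) (C : Finset I) (k : I) :
    Prop :=
  k ∈ C ∧ ∀ s ∈ S, ∃ i ∈ C, i ≠ k ∧ ∀ t ∈ S, v i s ≤ v i t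

/-- Room of type `k` next to the door `(S, C)`. -/
def OfType {X I Λ : Type*} [LinearOrder Λ] (v : I → X → Λ) (S : Finset X) (C : Finset I) (k : I)
    (r : Finset X × Finset I) : Prop :=
  r = (S, C.erase k) ∨ ∃ x, x ∉ S ∧ r = (insert x S, C) ∧
    ∀ i ∈ C, i ≠ k → ∃ s ∈ S, v i s < v i x

def Inc {X I Λ : Type*} [LinearOrder Λ] (v : I → X → Λ) (S : Finset X) (C : Finset I)
    (r : Finset X × Finset I) : Prop :=
  Dom v r.1 r.2 ∧ r.1.card = r.2.card ∧ S ⊆ r.1 ∧ r.2 ⊆ C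

section
variable {X I Λ : Type*} [Fintype X] [Fintype I] [LinearOrder Λ] (v : I → X → Λ)

theorem room_exists {S : Finset X} {C : Finset I} (hd : Dom v S C) (hc : C.card = S.card + 1)
    {k : I} (hk : Crit v S C k) : ∃ r, Inc v S C r ∧ OfType v S C k r := by
  by_cases hM : ∃ y, ∀ i ∈ C, i ≠ k → ∃ s ∈ S, v i s < v i y
  · obtain ⟨x, hx, hmax⟩ := Finset.exists_max_image
      (Finset.univ.filter fun y => ∀ i ∈ C, i ≠ k → ∃ s ∈ S, v i s < v i y) (v k)
      (by obtain ⟨y, hy⟩ := hM; exact ⟨y, by simpa using hy⟩)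
    simp only [Finset.mem_filter, Finset.mem_univ, true_and] at hx hmax
    have hxS : x ∉ S := by
      intro h
      obtain ⟨i, hi, hik, h2⟩ := hk.2 x h
      obtain ⟨s, hs, h3⟩ := hx i hi hik
      exact absurd (h2 s hs) (not_le.2 h3)
    have hxk : ∀ s ∈ S, v k x ≤ v k s := by
      obtain ⟨i, hi, h2⟩ := hd x
      by_cases hik : i = k
      · subst hik; exact h2
      · obtain ⟨s, hs, h3⟩ := hx i hi hik
        exact absurd (h2 s hs) (not_le.2 h3)
    refine ⟨(insert x S, C), ⟨?_, ?_, ?_, ?_⟩, Or.inr ⟨x, hxS, rfl, hx⟩⟩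
    · intro y
      by_cases hy : ∀ i ∈ C, i ≠ k → ∃ s ∈ S, v i s < v i y
      · refine ⟨k, hk.1, ?_⟩
        intro s hs
        rcases Finset.mem_insert.1 hs with rfl | hs
        · exact hmax y hy
        · exact (hmax y hy).trans (hxk s hs)
      · push Not at hy
        obtain ⟨i, hi, hik, h⟩ := hy
        refine ⟨i, hi, ?_⟩
        intro s hs
        rcases Finset.mem_insert.1 hs with rfl | hs
        · obtain ⟨t, ht, h3⟩ := hx i hi hik
          exact (h t ht).trans h3.le
        · exact h s hs
    · simp [hxS, hc]
    · exact Finset.subset_insert _ _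
    · exact Finset.Subset.refl _
  · push Not at hM
    refine ⟨(S, C.erase k), ⟨?_, ?_, ?_, ?_⟩, Or.inl rfl⟩
    · intro y
      obtain ⟨i, hi, hik, h⟩ := hM y
      exact ⟨i, Finset.mem_erase.2 ⟨hik, hi⟩, h⟩
    · simp [Finset.card_erase_of_mem hk.1, hc]
    · exact Finset.Subset.refl _
    · exact Finset.erase_subset _ _

theorem room_unique (hv : ∀ i, Function.Injective (v i)) {S : Finset X} {C : Finset I} {k : I} {r r' : Finset X × Finset I}
    (h : Inc v S C r) (h' : Inc v S C r') (ht : OfType v S C k r) (ht' : OfType v S C k r') :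
    r = r' := by
  have key : ∀ x, Dom v S (C.erase k) → (∀ i ∈ C, i ≠ k → ∃ s ∈ S, v i s < v i x) → False := by
    intro x hD hx
    obtain ⟨i, hi, h2⟩ := hD x
    obtain ⟨s, hs, h3⟩ := hx i (Finset.mem_of_mem_erase hi) (Finset.ne_of_mem_erase hi)
    exact absurd (h2 s hs) (not_le.2 h3)
  have key2 : ∀ x y, Dom v (insert x S) C → (∀ i ∈ C, i ≠ k → ∃ s ∈ S, v i s < v i y) →
      v k y ≤ v k x := by
    intro x y hD hy
    obtain ⟨i, hi, h2⟩ := hD y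
    by_cases hik : i = k
    · subst hik; exact h2 x (Finset.mem_insert_self _ _)
    · obtain ⟨s, hs, h3⟩ := hy i hi hik
      exact absurd (h2 s (Finset.mem_insert_of_mem hs)) (not_le.2 h3)
  rcases ht with rfl | ⟨x, hx, rfl, hx2⟩ <;> rcases ht' with rfl | ⟨y, hy, rfl, hy2⟩
  · rfl
  · exact (key y h.1 hy2).elim
  · exact (key x h'.1 hx2).elim
  · have : x = y := hv k (le_antisymm (key2 y x h'.1 hx2) (key2 x y h.1 hy2))
    rw [this]

theorem type_unique {S : Finset X} {C : Finset I} (hd : Dom v S C) {k k' : I} (hk : k ∈ C)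
    {r : Finset X × Finset I} (ht : OfType v S C k r) (ht' : OfType v S C k' r) : k = k' := by
  by_contra hne
  rcases ht with rfl | ⟨x, hx, rfl, hx2⟩ <;> rcases ht' with h | ⟨y, hy, h, hy2⟩
  · have h2 : C.erase k = C.erase k' := (Prod.ext_iff.1 h).2
    have : k ∈ C.erase k' := Finset.mem_erase.2 ⟨hne, hk⟩
    rw [← h2] at this
    simp at this
  · have h2 : S = insert y S := (Prod.ext_iff.1 h).1
    exact hy (h2 ▸ Finset.mem_insert_self _ _)
  · have h2 : insert x S = S := (Prod.ext_iff.1 h).1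
    exact hx (h2 ▸ Finset.mem_insert_self _ _)
  · have h2 : insert x S = insert y S := (Prod.ext_iff.1 h).1
    have hxy : x = y := by
      have : x ∈ insert y S := h2 ▸ Finset.mem_insert_self _ _
      exact (Finset.mem_insert.1 this).resolve_right hx
    subst hxy
    obtain ⟨i, hi, h3⟩ := hd x
    have : ∃ s ∈ S, v i s < v i x := by
      by_cases hik : i = k
      · exact hy2 i hi (fun h => hne (hik.symm.trans h))
      · exact hx2 i hi hik
    obtain ⟨s, hs, h4⟩ := this
    exact absurd (h3 s hs) (not_le.2 h4)

theorem room_type (hv : ∀ i, Function.Injective (v i)) {S : Finset X} {C : Finset I} (hc : C.card = S.card + 1)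
    {r : Finset X × Finset I} (h : Inc v S C r) : ∃ k, Crit v S C k ∧ OfType v S C k r := by
  obtain ⟨S', C'⟩ := r
  obtain ⟨hD, hcard, hS, hC⟩ := h
  simp only at hD hcard hS hC
  have h1 := Finset.card_le_card hS
  have h2 := Finset.card_le_card hC
  rcases Nat.lt_or_ge S.card S'.card with hlt | hge
  · have hCC : C' = C := Finset.eq_of_subset_of_card_le hC (by omega)
    subst hCC
    obtain ⟨x, hx, rfl⟩ : ∃ x, x ∉ S ∧ S' = insert x S := by
      obtain ⟨x, hx, hxS⟩ := Finset.exists_mem_notMem_of_card_lt_card hlt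
      refine ⟨x, hxS, ?_⟩
      symm
      apply Finset.eq_of_subset_of_card_le
      · exact Finset.insert_subset hx hS
      · rw [Finset.card_insert_of_notMem hxS]; omega
    have hch : ∀ s, ∃ i ∈ C', ∀ t ∈ insert x S, v i s ≤ v i t := hD
    choose g hg hg2 using hch
    have hinj : Set.InjOn g (insert x S : Finset X) := by
      intro a ha b hb hab
      apply hv (g a)
      apply le_antisymm (hg2 a b hb)
      rw [hab]; exact hg2 b a ha
    have hsurj : Set.SurjOn g (insert x S : Finset X) C' :=
      Finset.surjOn_of_injOn_of_card_le g (fun a _ => hg a) hinj (by omega)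
    refine ⟨g x, ⟨hg x, ?_⟩, Or.inr ⟨x, hx, rfl, ?_⟩⟩
    · intro s hs
      refine ⟨g s, hg s, ?_, fun t ht => hg2 s t (Finset.mem_insert_of_mem ht)⟩
      intro h
      have := hinj (Finset.mem_coe.2 (Finset.mem_insert_of_mem hs))
        (Finset.mem_coe.2 (Finset.mem_insert_self _ _)) h
      exact hx (this ▸ hs)
    · intro i hi hik
      obtain ⟨s, hs, rfl⟩ := hsurj hi
      have hsx : s ≠ x := fun h => hik (by rw [h])
      refine ⟨s, (Finset.mem_insert.1 (Finset.mem_coe.1 hs)).resolve_left hsx, ?_⟩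
      exact lt_of_le_of_ne (hg2 s x (Finset.mem_insert_self _ _)) (fun h => hsx (hv _ h))
  · have hSS : S = S' := Finset.eq_of_subset_of_card_le hS hge
    subst hSS
    obtain ⟨k, hk, hkC⟩ := Finset.exists_mem_notMem_of_card_lt_card (s := C') (t := C) (by omega)
    have hCe : C' = C.erase k := by
      apply Finset.eq_of_subset_of_card_le
      · intro i hi
        exact Finset.mem_erase.2 ⟨fun h => hkC (h ▸ hi), hC hi⟩
      · rw [Finset.card_erase_of_mem hk]; omega
    subst hCe
    refine ⟨k, ⟨hk, ?_⟩, Or.inl rfl⟩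
    intro s hs
    obtain ⟨i, hi, h3⟩ := hD s
    exact ⟨i, Finset.mem_of_mem_erase hi, Finset.ne_of_mem_erase hi, h3⟩

theorem rooms_card (hv : ∀ i, Function.Injective (v i)) {S : Finset X} {C : Finset I} (hd : Dom v S C) (hc : C.card = S.card + 1) :
    (Finset.univ.filter (Crit v S C)).card = (Finset.univ.filter (Inc v S C)).card := by
  have hch : ∀ k : I, ∃ r, Crit v S C k → Inc v S C r ∧ OfType v S C k r := by
    intro k
    by_cases hk : Crit v S C k
    · obtain ⟨r, hr⟩ := room_exists v hd hc hk
      exact ⟨r, fun _ => hr⟩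
    · exact ⟨(∅, ∅), fun h => (hk h).elim⟩
  choose R hR using hch
  apply Finset.card_bij (fun k _ => R k)
  · intro k hk
    simp only [Finset.mem_filter, Finset.mem_univ, true_and] at hk ⊢
    exact (hR k hk).1
  · intro k hk k' hk' h
    simp only [Finset.mem_filter, Finset.mem_univ, true_and] at hk hk'
    exact type_unique v hd hk.1 (hR k hk).2 (h ▸ (hR k' hk').2)
  · intro r hr
    simp only [Finset.mem_filter, Finset.mem_univ, true_and] at hr
    obtain ⟨k, hk, ht⟩ := room_type v hv hc hr
    exact ⟨k, by simpa using hk, room_unique v hv (hR k hk).1 hr (hR k hk).2 ht⟩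

theorem crit_card_two (hv : ∀ i, Function.Injective (v i)) {S : Finset X} {C : Finset I} (hd : Dom v S C) (hc : C.card = S.card + 1)
    (hS : S.Nonempty) : (Finset.univ.filter (Crit v S C)).card = 2 := by
  have hch : ∀ i : I, ∃ s ∈ S, ∀ t ∈ S, v i s ≤ v i t := fun i =>
    Finset.exists_min_image S (v i) hS
  choose m hm hm2 using hch
  have huniq : ∀ i s, s ∈ S → (∀ t ∈ S, v i s ≤ v i t) → m i = s := by
    intro i s hs h
    exact hv i (le_antisymm (hm2 i s hs) (h _ (hm i)))
  have hsurj : ∀ s ∈ S, ∃ i ∈ C, m i = s := by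
    intro s hs
    obtain ⟨i, hi, h⟩ := hd s
    exact ⟨i, hi, huniq i s hs h⟩
  obtain ⟨i1, h1, i2, h2, hne, heq⟩ := Finset.exists_ne_map_eq_of_card_lt_of_maps_to
    (s := C) (t := S) (f := m) (by omega) (fun i _ => hm i)
  have hinj : Set.InjOn m (C.erase i1 : Finset I) := by
    apply Finset.injOn_of_surjOn_of_card_le (t := S) m
    · exact fun i _ => hm i
    · intro s hs
      obtain ⟨i, hi, h⟩ := hsurj s hs
      by_cases hii : i = i1
      · refine ⟨i2, ?_, ?_⟩
        · exact Finset.mem_coe.2 (Finset.mem_erase.2 ⟨hne.symm, h2⟩)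
        · rw [← heq, ← hii, h]
      · exact ⟨i, Finset.mem_coe.2 (Finset.mem_erase.2 ⟨hii, hi⟩), h⟩
    · rw [Finset.card_erase_of_mem h1]; omega
  have : Finset.univ.filter (Crit v S C) = {i1, i2} := by
    ext k
    simp only [Finset.mem_filter, Finset.mem_univ, true_and, Finset.mem_insert,
      Finset.mem_singleton]
    constructor
    · rintro ⟨hkC, hk⟩
      by_contra hcon
      push Not at hcon
      obtain ⟨i, hi, hik, h⟩ := hk (m k) (hm k)
      have hmi := huniq i _ (hm k) h
      have hkm : k ∈ ((C.erase i1 : Finset I) : Set I) :=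
        Finset.mem_coe.2 (Finset.mem_erase.2 ⟨hcon.1, hkC⟩)
      by_cases hii : i = i1
      · have : m i2 = m k := by rw [← heq, ← hii, hmi]
        exact hcon.2 (hinj (Finset.mem_coe.2 (Finset.mem_erase.2 ⟨hne.symm, h2⟩)) hkm this).symm
      · exact hik (hinj (Finset.mem_coe.2 (Finset.mem_erase.2 ⟨hii, hi⟩)) hkm hmi)
    · intro hk
      have hmin : ∀ i s, m i = s → ∀ t ∈ S, v i s ≤ v i t := by
        rintro i s rfl; exact hm2 i
      rcases hk with rfl | rfl
      · refine ⟨h1, fun s hs => ?_⟩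
        obtain ⟨i, hi, h⟩ := hsurj s hs
        by_cases hii : i = k
        · exact ⟨i2, h2, hne.symm, hmin _ _ (by rw [← heq, ← hii, h])⟩
        · exact ⟨i, hi, hii, hmin _ _ h⟩
      · refine ⟨h2, fun s hs => ?_⟩
        obtain ⟨i, hi, h⟩ := hsurj s hs
        by_cases hii : i = k
        · exact ⟨i1, h1, hne, hmin _ _ (by rw [heq, ← hii, h])⟩
        · exact ⟨i, hi, hii, hmin _ _ h⟩
  rw [this, Finset.card_pair hne]

/-- Almost rainbow doors. -/
def ADoor (l : X → I) (i0 : I) (d : Finset X × Finset I) : Prop :=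
  i0 ∈ d.2 ∧ d.1.image l = d.2.erase i0 ∧ d.2.card = d.1.card + 1

theorem room_doors_even (l : X → I) (i0 : I) (S' : Finset X) (C' : Finset I)
    (hcard : S'.card = C'.card) (hnr : S'.image l ≠ C') :
    Even (Finset.univ.filter fun d : Finset X × Finset I =>
      ADoor l i0 d ∧ d.1 ⊆ S' ∧ C' ⊆ d.2).card := by
  by_cases hex : ∃ d : Finset X × Finset I, ADoor l i0 d ∧ d.1 ⊆ S' ∧ C' ⊆ d.2
  swap
  · push Not at hex
    rw [Finset.filter_false_of_mem]
    · simp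
    · rintro d - ⟨h1, h2, h3⟩
      exact hex d h1 h2 h3
  -- classification of doors
  have hclass : ∀ d : Finset X × Finset I, ADoor l i0 d → d.1 ⊆ S' → C' ⊆ d.2 →
      (d.1 = S' ∧ d.2 = insert i0 (S'.image l)) ∨ (∃ x ∈ S', d.1 = S'.erase x ∧ d.2 = C') := by
    rintro ⟨S, C⟩ ⟨h1, h2, h3⟩ hS hC
    simp only at h1 h2 h3 hS hC ⊢
    have hc1 := Finset.card_le_card hS
    have hc2 := Finset.card_le_card hC
    rcases Nat.lt_or_ge S.card S'.card with hlt | hge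
    · right
      obtain ⟨x, hx, hxS⟩ := Finset.exists_mem_notMem_of_card_lt_card hlt
      refine ⟨x, hx, ?_, ?_⟩
      · apply Finset.eq_of_subset_of_card_le
        · intro s hs
          exact Finset.mem_erase.2 ⟨fun h => hxS (h ▸ hs), hS hs⟩
        · rw [Finset.card_erase_of_mem hx]; omega
      · exact (Finset.eq_of_subset_of_card_le hC (by omega)).symm
    · left
      have hSS : S = S' := Finset.eq_of_subset_of_card_le hS hge
      subst hSS
      refine ⟨rfl, ?_⟩
      rw [h2, Finset.insert_erase h1]
  -- injectivity on the door
  have hinj : ∀ d : Finset X × Finset I, ADoor l i0 d → Set.InjOn l d.1 := by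
    rintro ⟨S, C⟩ ⟨h1, h2, h3⟩
    simp only at h1 h2 h3 ⊢
    apply Finset.card_image_iff.1
    rw [h2, Finset.card_erase_of_mem h1]; omega
  have hi0 : i0 ∈ C' := by
    by_contra hi0
    obtain ⟨⟨S, C⟩, hd, hS, hC⟩ := hex
    rcases hclass _ hd hS hC with ⟨h1, h2⟩ | ⟨x, hx, h1, h2⟩
    · simp only at h1 h2 hC
      subst h1
      obtain ⟨h3, h4, h5⟩ := hd
      simp only at h3 h4 h5
      apply hnr
      symm
      apply Finset.eq_of_subset_of_card_le
      · rw [h4]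
        intro i hi
        exact Finset.mem_erase.2 ⟨fun h => hi0 (h ▸ hi), hC hi⟩
      · rw [h4, Finset.card_erase_of_mem h3]; omega
    · simp only at h1 h2
      subst h2
      exact hi0 hd.1
  have hposC : 0 < C'.card := Finset.card_pos.2 ⟨i0, hi0⟩
  suffices h : (Finset.univ.filter fun d : Finset X × Finset I =>
      ADoor l i0 d ∧ d.1 ⊆ S' ∧ C' ⊆ d.2).card = 2 by rw [h]; decide
  -- a type B door at x is valid iff image of erase is C' minus i0
  have hBval : ∀ x ∈ S', (S'.erase x).image l = C'.erase i0 →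
      ADoor l i0 (S'.erase x, C') ∧ (S'.erase x) ⊆ S' ∧ C' ⊆ C' := by
    intro x hx h
    refine ⟨⟨hi0, h, ?_⟩, Finset.erase_subset _ _, Finset.Subset.refl _⟩
    simp only
    rw [Finset.card_erase_of_mem hx]; omega
  by_cases hA : ADoor l i0 (S', insert i0 (S'.image l)) ∧ C' ⊆ insert i0 (S'.image l)
  · obtain ⟨hA1, hA2⟩ := hA
    have hinjS := hinj _ hA1
    obtain ⟨h1, h2, h3⟩ := hA1
    simp only at h1 h2 h3 hinjS
    have hi0T : i0 ∉ S'.image l := by rw [h2]; simp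
    obtain ⟨k, hk, hkC⟩ := Finset.exists_mem_notMem_of_card_lt_card
      (s := C') (t := insert i0 (S'.image l)) (by omega)
    have hki : k ≠ i0 := fun h => hkC (h ▸ hi0)
    obtain ⟨x, hx, rfl⟩ := Finset.mem_image.1 ((Finset.mem_insert.1 hk).resolve_left hki)
    have himg : (S'.erase x).image l = C'.erase i0 := by
      symm
      apply Finset.eq_of_subset_of_card_le
      · intro i hi
        have hiT := (Finset.mem_insert.1 (hA2 (Finset.mem_of_mem_erase hi))).resolve_left
          (Finset.ne_of_mem_erase hi)
        obtain ⟨s, hs, rfl⟩ := Finset.mem_image.1 hiT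
        refine Finset.mem_image_of_mem _ (Finset.mem_erase.2 ⟨?_, hs⟩)
        rintro rfl
        exact hkC (Finset.mem_of_mem_erase hi)
      · refine Finset.card_image_le.trans ?_
        rw [Finset.card_erase_of_mem hx, Finset.card_erase_of_mem hi0]; omega
    have : (Finset.univ.filter fun d : Finset X × Finset I =>
      ADoor l i0 d ∧ d.1 ⊆ S' ∧ C' ⊆ d.2) =
        {(S', insert i0 (S'.image l)), (S'.erase x, C')} := by
      ext d
      simp only [Finset.mem_filter, Finset.mem_univ, true_and, Finset.mem_insert,
        Finset.mem_singleton]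
      constructor
      · rintro ⟨hd, hS, hC⟩
        rcases hclass d hd hS hC with ⟨e1, e2⟩ | ⟨y, hy, e1, e2⟩
        · left; exact Prod.ext e1 e2
        · right
          have hyx : x = y := by
            by_contra hne
            have hmem : l x ∈ d.1.image l := by
              rw [e1]
              exact Finset.mem_image_of_mem _ (Finset.mem_erase.2 ⟨hne, hx⟩)
            rw [hd.2.1, e2] at hmem
            exact hkC (Finset.mem_of_mem_erase hmem)
          subst hyx
          exact Prod.ext e1 e2
      · rintro (rfl | rfl)
        · exact ⟨⟨h1, h2, h3⟩, Finset.Subset.refl _, hA2⟩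
        · exact hBval x hx himg
    rw [this, Finset.card_pair]
    intro h
    have := (Prod.ext_iff.1 h).1
    simp only at this
    have hx' := hx
    rw [this] at hx'
    simp at hx'
  · obtain ⟨d, hd, hS, hC⟩ := hex
    rcases hclass d hd hS hC with ⟨e1, e2⟩ | ⟨x, hx, e1, e2⟩
    · exfalso
      apply hA
      have : d = (S', insert i0 (S'.image l)) := Prod.ext e1 e2
      subst this
      exact ⟨hd, hC⟩
    · have hde : d = (S'.erase x, C') := Prod.ext e1 e2
      subst hde
      have hinjS := hinj _ hd
      obtain ⟨h1, h2, h3⟩ := hd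
      simp only at h1 h2 h3 hinjS
      have hSx : S' = insert x (S'.erase x) := (Finset.insert_erase hx).symm
      have hT : S'.image l = insert (l x) (C'.erase i0) := by
        conv_lhs => rw [hSx]
        rw [Finset.image_insert, h2]
      have hlx0 : l x ≠ i0 := by
        intro h
        apply hnr
        rw [hT, h, Finset.insert_erase hi0]
      have hlxC : l x ∈ C' := by
        by_contra hlx
        apply hA
        refine ⟨⟨Finset.mem_insert_self _ _, ?_, ?_⟩, ?_⟩
        · simp only
          rw [Finset.erase_insert]
          rw [hT]
          simp [Ne.symm hlx0]
        · simp only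
          have e : i0 ∉ insert (l x) (C'.erase i0) := by simp [Ne.symm hlx0]
          have e2 : l x ∉ C'.erase i0 := fun h => hlx (Finset.mem_of_mem_erase h)
          rw [hT, Finset.card_insert_of_notMem e, Finset.card_insert_of_notMem e2,
            Finset.card_erase_of_mem hi0]
          omega
        · intro i hi
          by_cases hii : i = i0
          · simp [hii]
          · rw [hT]; simp [hii, hi]
      have hlx' : l x ∈ (S'.erase x).image l := by
        rw [h2]; exact Finset.mem_erase.2 ⟨hlx0, hlxC⟩
      obtain ⟨y, hy, hyx⟩ := Finset.mem_image.1 hlx'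
      have hyne : y ≠ x := Finset.ne_of_mem_erase hy
      have hyS : y ∈ S' := Finset.mem_of_mem_erase hy
      have hT2 : S'.image l = C'.erase i0 := by
        rw [hT, Finset.insert_eq_of_mem (Finset.mem_erase.2 ⟨hlx0, hlxC⟩)]
      have himg : (S'.erase y).image l = C'.erase i0 := by
        rw [← hT2]
        apply Finset.Subset.antisymm (Finset.image_subset_image (Finset.erase_subset _ _))
        intro i hi
        obtain ⟨s, hs, rfl⟩ := Finset.mem_image.1 hi
        by_cases hsy : s = y
        · subst hsy
          rw [hyx]
          exact Finset.mem_image_of_mem _ (Finset.mem_erase.2 ⟨hyne.symm, hx⟩)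
        · exact Finset.mem_image_of_mem _ (Finset.mem_erase.2 ⟨hsy, hs⟩)
      have : (Finset.univ.filter fun d : Finset X × Finset I =>
        ADoor l i0 d ∧ d.1 ⊆ S' ∧ C' ⊆ d.2) = {(S'.erase x, C'), (S'.erase y, C')} := by
        ext d
        simp only [Finset.mem_filter, Finset.mem_univ, true_and, Finset.mem_insert,
          Finset.mem_singleton]
        constructor
        · rintro ⟨hd, hS, hC⟩
          rcases hclass d hd hS hC with ⟨e1, e2⟩ | ⟨z, hz, e3, e4⟩
          · exfalso
            apply hA
            have : d = (S', insert i0 (S'.image l)) := Prod.ext e1 e2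
            subst this
            exact ⟨hd, hC⟩
          · by_cases hzx : z = x
            · left; subst hzx; exact Prod.ext e3 e4
            · right
              have hzy : z = y := by
                by_contra hzy
                have hin := hinj d hd
                rw [e3] at hin
                have := hin (Finset.mem_coe.2 (Finset.mem_erase.2 ⟨Ne.symm hzy, hyS⟩))
                  (Finset.mem_coe.2 (Finset.mem_erase.2 ⟨Ne.symm hzx, hx⟩)) hyx
                exact hyne this
              subst hzy; exact Prod.ext e3 e4
        · rintro (rfl | rfl)
          · exact hBval x hx h2
          · exact hBval y hyS himg
      rw [this, Finset.card_pair]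
      intro h
      have := (Prod.ext_iff.1 h).1
      simp only at this
      rw [this] at hy
      simp at hy

/-- Scarf's lemma. -/
theorem scarf [Nonempty X] [Nonempty I] (hv : ∀ i, Function.Injective (v i)) (l : X → I) :
    ∃ S : Finset X, S.Nonempty ∧ Dom v S (S.image l) := by
  by_contra hcon
  have hcon : ∀ S C, Dom v S C → S.card = C.card → S.image l ≠ C := by
    intro S C hD hc h
    apply hcon
    refine ⟨S, ?_, h ▸ hD⟩
    obtain ⟨x⟩ := (inferInstance : Nonempty X)
    obtain ⟨i, hi, -⟩ := hD x
    rw [← Finset.card_pos, hc]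
    exact Finset.card_pos.2 ⟨i, hi⟩
  obtain ⟨i0⟩ := (inferInstance : Nonempty I)
  let rooms : Finset (Finset X × Finset I) :=
    Finset.univ.filter fun r => Dom v r.1 r.2 ∧ r.1.card = r.2.card
  let doors : Finset (Finset X × Finset I) :=
    Finset.univ.filter fun d => Dom v d.1 d.2 ∧ ADoor l i0 d
  let rel : Finset X × Finset I → Finset X × Finset I → Prop :=
    fun d r => d.1 ⊆ r.1 ∧ r.2 ⊆ d.2
  have hdc := Finset.sum_card_bipartiteAbove_eq_sum_card_bipartiteBelow rel (s := doors)
    (t := rooms)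
  have hR : Even (∑ b ∈ rooms, (Finset.bipartiteBelow rel doors b).card) := by
    apply Finset.even_sum
    intro r hr
    simp only [rooms, Finset.mem_filter, Finset.mem_univ, true_and] at hr
    have := room_doors_even l i0 r.1 r.2 hr.2 (hcon _ _ hr.1 hr.2)
    suffices heq : Finset.bipartiteBelow rel doors r = Finset.univ.filter
        (fun d : Finset X × Finset I => ADoor l i0 d ∧ d.1 ⊆ r.1 ∧ r.2 ⊆ d.2) by
      rw [heq]; exact this
    ext d
    simp only [Finset.bipartiteBelow, doors, rel, Finset.mem_filter, Finset.mem_univ, true_and]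
    constructor
    · rintro ⟨⟨h1, h2⟩, h3⟩; exact ⟨h2, h3⟩
    · rintro ⟨h2, h3⟩
      refine ⟨⟨?_, h2⟩, h3⟩
      intro x
      obtain ⟨i, hi, h⟩ := hr.1 x
      exact ⟨i, h3.2 hi, fun s hs => h s (h3.1 hs)⟩
  have habove : ∀ d ∈ doors, (Finset.bipartiteAbove rel rooms d).card =
      (Finset.univ.filter (Crit v d.1 d.2)).card := by
    intro d hd
    simp only [doors, Finset.mem_filter, Finset.mem_univ, true_and] at hd
    rw [rooms_card v hv hd.1 hd.2.2.2]
    congr 1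
    ext r
    simp only [Finset.bipartiteAbove, rooms, rel, Inc, Finset.mem_filter, Finset.mem_univ,
      true_and]
    tauto
  have h0 : ((∅, {i0}) : Finset X × Finset I) ∈ doors := by
    simp only [doors, Finset.mem_filter, Finset.mem_univ, true_and]
    refine ⟨fun x => ⟨i0, by simp, by simp⟩, by simp, ?_, by simp⟩
    ext i; simp
  have hL : Odd (∑ a ∈ doors, (Finset.bipartiteAbove rel rooms a).card) := by
    rw [Finset.sum_congr rfl habove, ← Finset.add_sum_erase _ _ h0]
    apply Odd.add_even
    · have : Finset.univ.filter (Crit v (∅ : Finset X) {i0}) = {i0} := by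
        ext i; simp [Crit]
      simp only [this]
      simp
    · apply Finset.even_sum
      intro d hd
      obtain ⟨hne, hd⟩ := Finset.mem_erase.1 hd
      simp only [doors, Finset.mem_filter, Finset.mem_univ, true_and] at hd
      rw [crit_card_two v hv hd.1 hd.2.2.2]
      · decide
      · rw [Finset.nonempty_iff_ne_empty]
        intro h
        apply hne
        obtain ⟨h1, h2, h3⟩ := hd.2
        refine Prod.ext h ?_
        rw [h] at h3
        obtain ⟨j, hj⟩ := Finset.card_eq_one.1 h3
        rw [hj] at h1 ⊢
        rw [Finset.mem_singleton.1 h1]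
  rw [hdc] at hL
  exact (Nat.not_even_iff_odd.2 hL) hR
end
end NashAux

namespace NashAux

theorem approx_fixed {T : Type} [Fintype T] [Nonempty T] (f : (T → ℝ) → (T → ℝ))
    (hf : Continuous f) (hm : ∀ x ∈ stdSimplex ℝ T, f x ∈ stdSimplex ℝ T) (ε : ℝ) (hε : 0 < ε) :
    ∃ x ∈ stdSimplex ℝ T, ∀ i, x i - f x i ≤ ε := by
  have hK : IsCompact (stdSimplex ℝ T) := isCompact_stdSimplex ℝ T
  have huc := hK.uniformContinuousOn_of_continuous hf.continuousOn
  rw [Metric.uniformContinuousOn_iff] at huc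
  obtain ⟨η, hη, huc⟩ := huc (ε / 2) (by positivity)
  set n : ℝ := (Fintype.card T : ℝ) with hn
  have hn0 : 0 < n := by rw [hn]; exact_mod_cast Fintype.card_pos
  set κ : ℝ := min (η / 2) (ε / 2) with hκ
  have hκ0 : 0 < κ := by rw [hκ]; positivity
  set δ : ℝ := κ / n with hδ
  have hδ0 : 0 < δ := by rw [hδ]; positivity
  obtain ⟨t, htK, htf, htc⟩ := hK.finite_cover_balls hδ0
  have : Fintype t := htf.fintype
  have hne : (stdSimplex ℝ T).Nonempty :=
    ⟨_, single_mem_stdSimplex ℝ (Classical.arbitrary T)⟩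
  have : Nonempty t := by
    obtain ⟨x, hx⟩ := hne
    have := htc hx
    simp only [Set.mem_iUnion] at this
    obtain ⟨y, hy, -⟩ := this
    exact ⟨⟨y, hy⟩⟩
  have hlab : ∀ x : t, ∃ i, x.1 i ≤ f x.1 i := by
    intro x
    by_contra h
    push Not at h
    have h1 := (htK x.2).2
    have h2 := (hm _ (htK x.2)).2
    have := Finset.sum_lt_sum_of_nonempty (s := Finset.univ) Finset.univ_nonempty
      (fun i _ => h i)
    linarith
  choose l hl using hlab
  obtain ⟨S, hS, hD⟩ := scarf (fun (i : T) (x : t) => toLex (x.1 i, Fintype.equivFin t x))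
    (by
      intro i x y hxy
      have := congrArg (fun z => (ofLex z).2) hxy
      simpa using this) l
  set C := S.image l with hC
  have hCne : C.Nonempty := hS.image l
  -- minima
  have hmin : ∀ i : T, ∃ s ∈ S, ∀ s' ∈ S, s.1 i ≤ s'.1 i := fun i =>
    Finset.exists_min_image S (fun s => s.1 i) hS
  choose m hmS hm2 using hmin
  have hsum : 1 - ∑ i ∈ C, (m i).1 i < κ := by
    by_contra hcon
    push Not at hcon
    have hc0 : (0 : ℝ) < C.card := by exact_mod_cast Finset.card_pos.2 hCne
    set e : ℝ := (1 - ∑ i ∈ C, (m i).1 i) / C.card with he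
    have heδ : δ ≤ e := by
      rw [hδ, he]
      have : (C.card : ℝ) ≤ n := by rw [hn]; exact_mod_cast Finset.card_le_univ C
      exact div_le_div₀ (by linarith) hcon hc0 this
    let y : T → ℝ := fun i => if i ∈ C then (m i).1 i + e else 0
    have hy : y ∈ stdSimplex ℝ T := by
      constructor
      · intro i
        simp only [y]
        split_ifs
        · have := (htK (m i).2).1 i
          linarith
        · exact le_refl _
      · simp only [y]
        rw [Finset.sum_ite_mem, Finset.univ_inter, Finset.sum_add_distrib, Finset.sum_const,
          nsmul_eq_mul, he, mul_div_cancel₀ _ hc0.ne']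
        ring
    have := htc hy
    simp only [Set.mem_iUnion] at this
    obtain ⟨x, hx, hxy⟩ := this
    obtain ⟨i, hi, h⟩ := hD ⟨x, hx⟩
    have h1 := h (m i) (hmS i)
    rw [Prod.Lex.toLex_le_toLex] at h1
    have h2 : x i ≤ (m i).1 i := by
      rcases h1 with h1 | h1
      · exact h1.le
      · exact h1.1.le
    have h3 : dist (y i) (x i) < δ := lt_of_le_of_lt (dist_le_pi_dist y x i) hxy
    have h4 : y i = (m i).1 i + e := by simp only [y, if_pos hi]
    rw [h4, Real.dist_eq] at h3
    have := (abs_lt.1 h3).2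
    linarith
  -- closeness
  have hsplit : ∀ s : t, ∑ i ∈ C, s.1 i + ∑ i ∈ Cᶜ, s.1 i = 1 := by
    intro s
    rw [Finset.sum_add_sum_compl]
    exact (htK s.2).2
  have hnn : ∀ (s : t) i, 0 ≤ s.1 i := fun s i => (htK s.2).1 i
  have hout : ∀ s ∈ S, ∀ i, i ∉ C → s.1 i ≤ κ := by
    intro s hs i hi
    have h1 := hsplit s
    have h2 : s.1 i ≤ ∑ i ∈ Cᶜ, s.1 i :=
      Finset.single_le_sum (f := fun i => s.1 i) (fun j _ => hnn s j) (by simpa using hi)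
    have h3 : ∑ i ∈ C, (m i).1 i ≤ ∑ i ∈ C, s.1 i := Finset.sum_le_sum fun i _ => hm2 i s hs
    linarith
  have hin : ∀ s ∈ S, ∀ i ∈ C, s.1 i ≤ (m i).1 i + κ := by
    intro s hs i hi
    have h1 := hsplit s
    have h2 : 0 ≤ ∑ i ∈ Cᶜ, s.1 i := Finset.sum_nonneg fun j _ => hnn s j
    have h3 : s.1 i - (m i).1 i ≤ ∑ i ∈ C, (s.1 i - (m i).1 i) :=
      Finset.single_le_sum (f := fun i => s.1 i - (m i).1 i)
        (fun j _ => sub_nonneg.2 (hm2 j s hs)) hi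
    rw [Finset.sum_sub_distrib] at h3
    linarith
  have hclose : ∀ s ∈ S, ∀ s' ∈ S, ∀ i, s.1 i ≤ s'.1 i + κ := by
    intro s hs s' hs' i
    by_cases hi : i ∈ C
    · have := hin s hs i hi
      have := hm2 i s' hs'
      linarith
    · have := hout s hs i hi
      have := hnn s' i
      linarith
  have hκη : κ ≤ η / 2 := min_le_left _ _
  have hκε : κ ≤ ε / 2 := min_le_right _ _
  obtain ⟨x, hx⟩ := hS
  refine ⟨x.1, htK x.2, fun i => ?_⟩
  by_cases hi : i ∈ C
  · obtain ⟨s, hs, hsi⟩ := Finset.mem_image.1 hi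
    have h1 := hl s
    rw [hsi] at h1
    have hdist : dist x.1 s.1 < η := by
      refine lt_of_le_of_lt ((dist_pi_le_iff hκ0.le).2 fun j => ?_) (by linarith : κ < η)
      rw [Real.dist_eq, abs_le]
      have := hclose x hx s hs j
      have := hclose s hs x hx j
      constructor <;> linarith
    have h2 := huc x.1 (htK x.2) s.1 (htK s.2) hdist
    have h3 := lt_of_le_of_lt (dist_le_pi_dist (f x.1) (f s.1) i) h2
    rw [Real.dist_eq] at h3
    have := (abs_lt.1 h3).1
    have := hclose x hx s hs i
    linarith
  · have := hout x hx i hi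
    have := (hm _ (htK x.2)).1 i
    linarith

/-- Brouwer's theorem on the standard simplex. -/
theorem brouwer {T : Type} [Fintype T] [Nonempty T] (f : (T → ℝ) → (T → ℝ))
    (hf : Continuous f) (hm : ∀ x ∈ stdSimplex ℝ T, f x ∈ stdSimplex ℝ T) :
    ∃ x ∈ stdSimplex ℝ T, f x = x := by
  have hK : IsCompact (stdSimplex ℝ T) := isCompact_stdSimplex ℝ T
  have hne : (stdSimplex ℝ T).Nonempty :=
    ⟨_, single_mem_stdSimplex ℝ (Classical.arbitrary T)⟩
  let φ : (T → ℝ) → ℝ := fun x => ∑ i, max 0 (x i - f x i)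
  have hφ : Continuous φ := by fun_prop
  obtain ⟨x, hx, hmin⟩ := hK.exists_isMinOn hne hφ.continuousOn
  have hle : ∀ i, x i ≤ f x i := by
    by_contra hcon
    push Not at hcon
    obtain ⟨i, hi⟩ := hcon
    have hpos : 0 < φ x := by
      have : max 0 (x i - f x i) ≤ φ x :=
        Finset.single_le_sum (f := fun i => max 0 (x i - f x i))
          (fun j _ => le_max_left _ _) (Finset.mem_univ i)
      have h2 : x i - f x i ≤ max 0 (x i - f x i) := le_max_right _ _
      linarith
    have hn0 : (0 : ℝ) < Fintype.card T := by exact_mod_cast Fintype.card_pos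
    obtain ⟨y, hy, hy2⟩ := approx_fixed f hf hm (φ x / 2 / Fintype.card T) (by positivity)
    have h1 : φ x ≤ φ y := hmin hy
    have h2 : φ y ≤ ∑ _i : T, φ x / 2 / Fintype.card T :=
      Finset.sum_le_sum fun i _ => max_le (by positivity) (hy2 i)
    rw [Finset.sum_const, Finset.card_univ, nsmul_eq_mul, mul_div_cancel₀ _ hn0.ne'] at h2
    linarith
  refine ⟨x, hx, ?_⟩
  have h1 := hx.2
  have h2 := (hm x hx).2
  have h3 := (Finset.sum_eq_sum_iff_of_le (s := Finset.univ) (fun i _ => hle i)).1 (by rw [h1, h2])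
  funext i
  exact (h3 i (Finset.mem_univ i)).symm

/-- Variational inequality on a product of simplices. -/
theorem exists_vi {ι : Type} [Fintype ι] [Nonempty ι] {S : ι → Type} [∀ i, Fintype (S i)]
    [∀ i, Nonempty (S i)] (V : ∀ i, S i → (∀ i, S i → ℝ) → ℝ) (hV : ∀ i s, Continuous (V i s)) :
    ∃ σ : ∀ i, S i → ℝ, (∀ i, σ i ∈ stdSimplex ℝ (S i)) ∧
      ∀ i s, V i s σ ≤ ∑ t, σ i t * V i t σ := by
  set k : ℝ := (Fintype.card ι : ℝ) with hk
  have hk0 : 0 < k := by rw [hk]; exact_mod_cast Fintype.card_pos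
  have hc0 : ∀ i, (0 : ℝ) < Fintype.card (S i) := fun i => by exact_mod_cast Fintype.card_pos
  let w : ((Σ i, S i) → ℝ) → ι → ℝ := fun y i => ∑ s, y ⟨i, s⟩
  let ρ : ((Σ i, S i) → ℝ) → (∀ i, S i → ℝ) := fun y i s =>
    (y ⟨i, s⟩ + max 0 (1 / k - w y i) / Fintype.card (S i)) / (w y i + max 0 (1 / k - w y i))
  let r : ∀ i, S i → (∀ i, S i → ℝ) → ℝ := fun i s σ => max 0 (V i s σ - ∑ t, σ i t * V i t σ)
  let g : (∀ i, S i → ℝ) → (∀ i, S i → ℝ) := fun σ i s =>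
    (σ i s + r i s σ) / (1 + ∑ t, r i t σ)
  have hden : ∀ y i, 0 < w y i + max 0 (1 / k - w y i) := by
    intro y i
    have : 1 / k - w y i ≤ max 0 (1 / k - w y i) := le_max_right _ _
    have : 0 < 1 / k := by positivity
    linarith
  have hr0 : ∀ i s σ, 0 ≤ r i s σ := fun i s σ => le_max_left _ _
  have hden2 : ∀ σ i, 0 < 1 + ∑ t, r i t σ := by
    intro σ i
    have := Finset.sum_nonneg (s := Finset.univ) (fun t _ => hr0 i t σ)
    linarith
  have hwc : ∀ i, Continuous fun y => w y i := by intro i; fun_prop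
  have hρc : Continuous ρ := by
    refine continuous_pi fun i => continuous_pi fun s => ?_
    refine Continuous.div ?_ ?_ fun y => (hden y i).ne'
    · have := hwc i; fun_prop
    · have := hwc i; fun_prop
  have hrc : ∀ i s, Continuous (r i s) := by
    intro i s
    have := hV i
    refine continuous_const.max ((hV i s).sub (continuous_finsetSum _ fun t _ => ?_))
    exact Continuous.mul (by fun_prop) (hV i t)
  have hgc : Continuous g := by
    refine continuous_pi fun i => continuous_pi fun s => ?_
    refine Continuous.div ?_ ?_ fun y => (hden2 y i).ne'
    · exact Continuous.add (by fun_prop) (hrc i s)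
    · exact continuous_const.add (continuous_finsetSum _ fun t _ => hrc i t)
  have hρm : ∀ y ∈ stdSimplex ℝ (Σ i, S i), ∀ i, ρ y i ∈ stdSimplex ℝ (S i) := by
    intro y hy i
    constructor
    · intro s
      have h1 := hy.1 ⟨i, s⟩
      have h2 : 0 ≤ max 0 (1 / k - w y i) := le_max_left _ _
      exact div_nonneg (add_nonneg h1 (div_nonneg h2 (hc0 i).le)) (hden y i).le
    · simp only [ρ]
      rw [← Finset.sum_div, Finset.sum_add_distrib, Finset.sum_const, Finset.card_univ,
        nsmul_eq_mul, mul_div_cancel₀ _ (hc0 i).ne']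
      exact div_self (hden y i).ne'
  have hgm : ∀ σ : ∀ i, S i → ℝ, (∀ i, σ i ∈ stdSimplex ℝ (S i)) →
      ∀ i, g σ i ∈ stdSimplex ℝ (S i) := by
    intro σ hσ i
    constructor
    · intro s
      exact div_nonneg (add_nonneg ((hσ i).1 s) (hr0 i s σ)) (hden2 σ i).le
    · simp only [g]
      rw [← Finset.sum_div, Finset.sum_add_distrib, (hσ i).2]
      exact div_self (hden2 σ i).ne'
  have : Nonempty (Σ i, S i) := ⟨⟨Classical.arbitrary ι, Classical.arbitrary _⟩⟩
  obtain ⟨y, hy, hfix⟩ := brouwer (T := Σ i, S i) (fun y p => g (ρ y) p.1 p.2 / k)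
    (by
      have h := hgc.comp hρc
      refine continuous_pi fun p => Continuous.div_const ?_ _
      exact (continuous_apply p.2).comp ((continuous_apply p.1).comp h))
    (by
      intro y hy
      have h := hgm _ (hρm y hy)
      constructor
      · intro p
        exact div_nonneg ((h p.1).1 p.2) hk0.le
      · rw [Fintype.sum_sigma]
        simp only
        simp_rw [← Finset.sum_div]
        rw [Finset.sum_congr rfl fun i _ => (h i).2]
        simp [hk])
  have hσ := hρm y hy
  have hy2 : ∀ i s, y ⟨i, s⟩ = g (ρ y) i s / k := fun i s => (congrFun hfix ⟨i, s⟩).symm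
  have hw : ∀ i, w y i = 1 / k := by
    intro i
    simp only [w]
    rw [Finset.sum_congr rfl fun s _ => hy2 i s, ← Finset.sum_div, (hgm _ hσ i).2]
  have hgσ : ∀ i s, ρ y i s = g (ρ y) i s := by
    intro i s
    have : ρ y i s = (y ⟨i, s⟩ + max 0 (1 / k - w y i) / Fintype.card (S i)) /
      (w y i + max 0 (1 / k - w y i)) := rfl
    rw [this, hw i, hy2 i s]
    simp
  generalize ρ y = σ at hσ hgσ
  refine ⟨σ, hσ, fun i => ?_⟩
  have h1 : ∀ s, r i s σ = σ i s * ∑ t, r i t σ := by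
    intro s
    have h := hgσ i s
    simp only [g] at h
    rw [eq_div_iff (hden2 σ i).ne'] at h
    linarith
  set avg := ∑ t, σ i t * V i t σ with havg
  have h2 : ∀ s, r i s σ * (V i s σ - avg) = r i s σ ^ 2 := by
    intro s
    simp only [r]
    rw [← havg]
    rcases le_total 0 (V i s σ - avg) with h | h
    · rw [max_eq_right h]; ring
    · rw [max_eq_left h]; ring
  have h3 : ∑ s, r i s σ ^ 2 = 0 := by
    rw [← Finset.sum_congr rfl fun s _ => h2 s]
    have : ∀ s, r i s σ * (V i s σ - avg) =
        (∑ t, r i t σ) * (σ i s * V i s σ - σ i s * avg) := by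
      intro s
      conv_lhs => rw [h1 s]
      ring
    rw [Finset.sum_congr rfl fun s _ => this s, ← Finset.mul_sum, Finset.sum_sub_distrib,
      ← Finset.sum_mul, (hσ i).2, ← havg]
    ring
  intro s
  have h4 := (Finset.sum_eq_zero_iff_of_nonneg (fun s _ => sq_nonneg _)).1 h3 s (Finset.mem_univ s)
  have h5 : r i s σ = 0 := by simpa using h4
  have h6 : V i s σ - avg ≤ r i s σ := le_max_right _ _
  linarith
end NashAux

namespace NashAux
open EFG
variable (G : EFG)

/-- Record of a complete history. -/
def hrecord (i : Fin G.n) (h : List ℕ) : List (ℕ × ℕ) := G.recordFrom i [] h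

theorem recordFrom_append (i : Fin G.n) (l₂ : List ℕ) : ∀ (l₁ pre : List ℕ),
    G.recordFrom i pre (l₁ ++ l₂) = G.recordFrom i pre l₁ ++ G.recordFrom i (pre ++ l₁) l₂ := by
  intro l₁
  induction l₁ with
  | nil => intro pre; simp [EFG.recordFrom]
  | cons b rest ih => intro pre; simp [EFG.recordFrom, ih]

theorem rec_append (i : Fin G.n) (h l : List ℕ) :
    hrecord G i (h ++ l) = hrecord G i h ++ G.recordFrom i h l := by
  simp [hrecord, recordFrom_append]

theorem rec_snoc (i : Fin G.n) (h : List ℕ) (a : ℕ) :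
    hrecord G i (h ++ [a]) = hrecord G i h ++ (if G.P h = some i then [(G.infoIdx h, a)] else []) := by
  rw [rec_append]; simp [EFG.recordFrom]

/-- Own probability of a record. -/
def own (b : ℕ → ℕ → ℝ) (L : List (ℕ × ℕ)) : ℝ := (L.map fun p => b p.1 p.2).prod

/-- Chance probability along a history. -/
def chA : List ℕ → List ℕ → ℝ
  | _, [] => 1
  | pre, b :: rest => (if G.P pre = none then G.fc pre b else 1) * chA (pre ++ [b]) rest

theorem prodAlong_eq (β : G.Profile) : ∀ (rest pre : List ℕ),
    G.prodAlong β pre rest = chA G pre rest * ∏ i, own (β i) (G.recordFrom i pre rest) := by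
  intro rest
  induction rest with
  | nil => intro pre; simp [EFG.prodAlong, chA, own, EFG.recordFrom]
  | cons b rest ih =>
    intro pre
    have h1 : G.moveProb β pre b = (if G.P pre = none then G.fc pre b else 1) *
        ∏ i, own (β i) (if G.P pre = some i then [(G.infoIdx pre, b)] else []) := by
      unfold EFG.moveProb
      cases hP : G.P pre with
      | none => simp [own]
      | some i =>
        rw [Finset.prod_eq_single i]
        · simp [own]
        · intro j _ hj
          simp [own, Ne.symm hj]
        · simp
    have h2 : ∀ i, own (β i) (G.recordFrom i pre (b :: rest)) =
        own (β i) (if G.P pre = some i then [(G.infoIdx pre, b)] else []) *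
          own (β i) (G.recordFrom i (pre ++ [b]) rest) := by
      intro i
      simp only [EFG.recordFrom, own, List.map_append, List.prod_append]
    rw [EFG.prodAlong, chA, ih, h1, Finset.prod_congr rfl fun i _ => h2 i, Finset.prod_mul_distrib]
    ring

/-- Pure strategies. -/
abbrev Pure (i : Fin G.n) : Type := ∀ j : Fin (G.m i), {a // a ∈ G.infoA i j}

/-- Agreement of a pure strategy with a record. -/
def Agree (i : Fin G.n) (s : Pure G i) (L : List (ℕ × ℕ)) : Prop :=
  ∀ p ∈ L, ∀ hj : p.1 < G.m i, (s ⟨p.1, hj⟩ : ℕ) = p.2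

/-- Weight of a record under a mixed strategy. -/
def wt (i : Fin G.n) (σ : Pure G i → ℝ) (L : List (ℕ × ℕ)) : ℝ :=
  ∑ s, σ s * if Agree G i s L then 1 else 0

theorem mem_info {i : Fin G.n} {h : List ℕ} {a : ℕ} (hP : G.P h = some i) (ha : h ++ [a] ∈ G.H) :
    G.infoIdx h < G.m i ∧ h ∈ G.Info i (G.infoIdx h) ∧ a ∈ G.infoA i (G.infoIdx h) := by
  have hH : h ∈ G.H := G.prefixClosed _ ha _ (List.prefix_append _ _)
  have hlt := G.infoIdx_lt i h hH hP ⟨a, ha⟩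
  have hI := (G.info_spec i _ h hlt).2 ⟨hH, hP, ⟨a, ha⟩, rfl⟩
  refine ⟨hlt, hI, ?_⟩
  unfold EFG.infoA
  rw [Finset.mem_sup]
  exact ⟨h, hI, Finset.mem_filter.2 ⟨G.act_mem h a ha, ha⟩⟩

theorem infoA_nonempty {i : Fin G.n} {j : ℕ} (hj : j < G.m i) : (G.infoA i j).Nonempty := by
  obtain ⟨h, hh⟩ := G.info_nonempty i j hj
  obtain ⟨hH, hP, ⟨a, ha⟩, rfl⟩ := (G.info_spec i j h hj).1 hh
  exact ⟨a, (mem_info G hP ha).2.2⟩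

theorem agree_append {i : Fin G.n} {s : Pure G i} {L L' : List (ℕ × ℕ)} :
    Agree G i s (L ++ L') ↔ Agree G i s L ∧ Agree G i s L' := by
  simp only [Agree, List.mem_append]
  constructor
  · intro h
    exact ⟨fun p hp => h p (Or.inl hp), fun p hp => h p (Or.inr hp)⟩
  · rintro ⟨h1, h2⟩ p (hp | hp)
    · exact h1 p hp
    · exact h2 p hp

theorem wt_nil {i : Fin G.n} {σ : Pure G i → ℝ} (hσ : σ ∈ stdSimplex ℝ (Pure G i)) :
    wt G i σ [] = 1 := by
  simp [wt, Agree, hσ.2]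

theorem wt_nonneg {i : Fin G.n} {σ : Pure G i → ℝ} (hσ : σ ∈ stdSimplex ℝ (Pure G i))
    (L : List (ℕ × ℕ)) : 0 ≤ wt G i σ L :=
  Finset.sum_nonneg fun s _ => mul_nonneg (hσ.1 s) (by split_ifs <;> norm_num)

theorem wt_sum {i : Fin G.n} (σ : Pure G i → ℝ) (L : List (ℕ × ℕ)) {j : ℕ} (hj : j < G.m i) :
    ∑ a ∈ G.infoA i j, wt G i σ (L ++ [(j, a)]) = wt G i σ L := by
  unfold wt
  rw [Finset.sum_comm]
  refine Finset.sum_congr rfl fun s _ => ?_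
  rw [← Finset.mul_sum]
  congr 1
  rw [Finset.sum_eq_single (s ⟨j, hj⟩ : ℕ)]
  · have : Agree G i s [(j, (s ⟨j, hj⟩ : ℕ))] := by
      intro p hp hj
      rw [List.mem_singleton] at hp
      subst hp
      rfl
    simp [agree_append, this]
  · intro a _ ha
    have : ¬ Agree G i s [(j, a)] := fun h => ha (h (j, a) (by simp) hj).symm
    simp [agree_append, this]
  · intro h
    exact (h (s ⟨j, hj⟩).2).elim

/-- Kuhn's theorem: mixed to behavioral. -/
theorem kuhn (hPR : G.PerfectRecall) (i : Fin G.n) (σ : Pure G i → ℝ)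
    (hσ : σ ∈ stdSimplex ℝ (Pure G i)) :
    ∃ b, G.IsBehStrategy i b ∧ ∀ h ∈ G.H, own b (hrecord G i h) = wt G i σ (hrecord G i h) := by
  have hrep : ∀ j : ℕ, ∃ L : List (ℕ × ℕ), j < G.m i → ∀ h ∈ G.Info i j, hrecord G i h = L := by
    intro j
    by_cases hj : j < G.m i
    · obtain ⟨h0, hh0⟩ := G.info_nonempty i j hj
      exact ⟨hrecord G i h0, fun _ h hh => hPR i j hj h hh h0 hh0⟩
    · exact ⟨[], fun h => (hj h).elim⟩
  choose R hR using hrep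
  refine ⟨fun j a => if wt G i σ (R j) = 0 then 1 / ((G.infoA i j).card : ℝ) else
    wt G i σ (R j ++ [(j, a)]) / wt G i σ (R j), ?_, ?_⟩
  · intro j hj
    by_cases h0 : wt G i σ (R j) = 0
    · simp only [if_pos h0]
      refine ⟨fun a _ => by positivity, ?_⟩
      have : ((G.infoA i j).card : ℝ) ≠ 0 := by
        exact_mod_cast (Finset.card_pos.2 (infoA_nonempty G hj)).ne'
      rw [Finset.sum_const, nsmul_eq_mul]
      field_simp
    · simp only [if_neg h0]
      refine ⟨fun a _ => div_nonneg (wt_nonneg G hσ _) (wt_nonneg G hσ _), ?_⟩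
      rw [← Finset.sum_div, wt_sum G σ _ hj, div_self h0]
  · intro h
    induction h using List.reverseRecOn with
    | nil =>
      intro _
      have : hrecord G i [] = [] := rfl
      rw [this, wt_nil G hσ]; simp [own]
    | append_singleton h a ih =>
      intro hha
      have ih := ih (G.prefixClosed _ hha _ (List.prefix_append _ _))
      rw [rec_snoc]
      by_cases hP : G.P h = some i
      · obtain ⟨hlt, hI, haI⟩ := mem_info G hP hha
        have hRh := hR _ hlt h hI
        rw [if_pos hP]
        unfold own at ih ⊢
        rw [List.map_append, List.prod_append, ih, hRh]
        simp only [List.map_cons, List.map_nil, List.prod_cons, List.prod_nil, mul_one]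
        split_ifs with h0
        · have hs := wt_sum G σ (R (G.infoIdx h)) hlt
          rw [h0] at hs
          have := (Finset.sum_eq_zero_iff_of_nonneg (fun a _ => wt_nonneg G hσ _)).1 hs a haI
          rw [this, h0]; simp
        · rw [mul_div_cancel₀ _ h0]
      · rw [if_neg hP, List.append_nil]; exact ih

theorem mem_rec {i : Fin G.n} {p : ℕ × ℕ} : ∀ h : List ℕ, p ∈ hrecord G i h →
    ∃ pre l, h = pre ++ p.2 :: l ∧ G.P pre = some i ∧ G.infoIdx pre = p.1 := by
  intro h
  induction h using List.reverseRecOn with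
  | nil => intro hp; simp [hrecord, EFG.recordFrom] at hp
  | append_singleton h a ih =>
    intro hp
    rw [rec_snoc, List.mem_append] at hp
    rcases hp with hp | hp
    · obtain ⟨pre, l, h1, h2⟩ := ih hp
      exact ⟨pre, l ++ [a], by simp [h1], h2⟩
    · split_ifs at hp with hP
      · rw [List.mem_singleton] at hp
        subst hp
        exact ⟨h, [], rfl, hP, rfl⟩
      · simp at hp

theorem no_repeat (hPR : G.PerfectRecall) {i : Fin G.n} {h : List ℕ} {a : ℕ}
    (hP : G.P h = some i) (ha : h ++ [a] ∈ G.H) : ∀ p ∈ hrecord G i h, p.1 ≠ G.infoIdx h := by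
  intro p hp hpe
  obtain ⟨pre, l, h1, h2, h3⟩ := mem_rec G h hp
  have hH : h ∈ G.H := G.prefixClosed _ ha _ (List.prefix_append _ _)
  have hpre : pre ++ [p.2] ∈ G.H := by
    apply G.prefixClosed _ hH
    rw [h1]
    exact ⟨l, by simp⟩
  obtain ⟨hlt, hI, -⟩ := mem_info G hP ha
  obtain ⟨-, hI', -⟩ := mem_info G h2 hpre
  rw [h3, hpe] at hI'
  have hrec : hrecord G i pre = hrecord G i h := hPR i _ hlt _ hI' _ hI
  have : h = (pre ++ [p.2]) ++ l := by simp [h1]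
  rw [this, rec_append, rec_snoc, if_pos h2] at hrec
  have := congrArg List.length hrec
  simp at this

/-- Behavioral to mixed. -/
theorem kuhn_conv (hPR : G.PerfectRecall) (i : Fin G.n) (b : ℕ → ℕ → ℝ)
    (hb : G.IsBehStrategy i b) :
    ∃ τ ∈ stdSimplex ℝ (Pure G i), ∀ h ∈ G.H, own b (hrecord G i h) = wt G i τ (hrecord G i h) := by
  have hsum : ∀ j : Fin (G.m i), ∑ a : {a // a ∈ G.infoA i j}, b j a = 1 := by
    intro j
    rw [Finset.sum_coe_sort (G.infoA i j) (fun a => b j a)]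
    exact (hb j j.2).2
  refine ⟨fun s => ∏ j : Fin (G.m i), b j (s j), ⟨?_, ?_⟩, ?_⟩
  · intro s
    exact Finset.prod_nonneg fun j _ => (hb j j.2).1 _ (s j).2
  · rw [← Fintype.prod_sum (fun (j : Fin (G.m i)) (a : {a // a ∈ G.infoA i j}) => b j a)]
    exact Finset.prod_eq_one fun j _ => hsum j
  · -- product formula
    have hform : ∀ L : List (ℕ × ℕ), wt G i (fun s => ∏ j : Fin (G.m i), b j (s j)) L =
        ∏ j : Fin (G.m i), ∑ a : {a // a ∈ G.infoA i j},
          b j a * if (∀ p ∈ L, p.1 = j → (a : ℕ) = p.2) then 1 else 0 := by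
      intro L
      rw [Fintype.prod_sum]
      refine Finset.sum_congr rfl fun s _ => ?_
      rw [Finset.prod_mul_distrib]
      congr 1
      rw [Finset.prod_ite_zero]
      have : Agree G i s L ↔ ∀ j ∈ Finset.univ, ∀ p ∈ L, p.1 = ((j : Fin (G.m i)) : ℕ) →
          (s j : ℕ) = p.2 := by
        constructor
        · rintro h ⟨j, hj⟩ _ p hp hpj
          simp only at hpj
          subst hpj
          exact h p hp hj
        · intro h p hp hj
          exact h ⟨p.1, hj⟩ (Finset.mem_univ _) p hp rfl
      simp only [this, Finset.prod_const_one]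
    intro h
    induction h using List.reverseRecOn with
    | nil =>
      intro _
      have : hrecord G i [] = [] := rfl
      rw [hform, this]
      symm
      simp only [own, List.map_nil, List.prod_nil]
      refine Finset.prod_eq_one fun j _ => ?_
      refine Eq.trans ?_ (hsum j)
      simp
    | append_singleton h a ih =>
      intro hha
      have ih := ih (G.prefixClosed _ hha _ (List.prefix_append _ _))
      rw [rec_snoc]
      by_cases hP : G.P h = some i
      · obtain ⟨hlt, hI, haI⟩ := mem_info G hP hha
        have hnr := no_repeat G hPR hP hha
        rw [if_pos hP]
        unfold own at ih ⊢
        rw [List.map_append, List.prod_append, ih, hform, hform]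
        simp only [List.map_cons, List.map_nil, List.prod_cons, List.prod_nil, mul_one]
        rw [← Finset.prod_erase_mul _ _ (Finset.mem_univ (⟨G.infoIdx h, hlt⟩ : Fin (G.m i))),
          ← Finset.prod_erase_mul _ _ (Finset.mem_univ (⟨G.infoIdx h, hlt⟩ : Fin (G.m i))),
          mul_assoc]
        congr 1
        · refine Finset.prod_congr rfl fun j hj => ?_
          have hj : G.infoIdx h ≠ j := by
            intro h'
            exact Finset.ne_of_mem_erase hj (Fin.ext h'.symm)
          refine Finset.sum_congr rfl fun c _ => ?_
          congr 2
          apply propext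
          simp only [List.mem_append, List.mem_singleton]
          constructor
          · rintro h1 p (hp | rfl) hpj
            · exact h1 p hp hpj
            · exact (hj hpj).elim
          · intro h1 p hp
            exact h1 p (Or.inl hp)
        · have e1 : ∀ c : {a // a ∈ G.infoA i (G.infoIdx h)},
              (∀ p ∈ hrecord G i h, p.1 = G.infoIdx h → (c : ℕ) = p.2) := by
            intro c p hp hpe
            exact (hnr p hp hpe).elim
          have e2 : ∀ c : {a // a ∈ G.infoA i (G.infoIdx h)},
              (∀ p ∈ hrecord G i h ++ [(G.infoIdx h, a)], p.1 = G.infoIdx h → (c : ℕ) = p.2) ↔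
                c = ⟨a, haI⟩ := by
            intro c
            simp only [List.mem_append, List.mem_singleton]
            constructor
            · intro h1
              exact Subtype.ext (h1 _ (Or.inr rfl) rfl)
            · rintro rfl p (hp | rfl) hpe
              · exact (hnr p hp hpe).elim
              · rfl
          simp only [e2]
          have e3 := hsum ⟨G.infoIdx h, hlt⟩
          simp only at e3
          rw [Finset.sum_congr rfl fun c _ => by rw [if_pos (e1 c), mul_one], e3]
          simp
      · rw [if_neg hP, List.append_nil]; exact ih

end NashAux

/-- Every finite extensive-form game with perfect recall possesses a Nash equilibrium in
behavioral strategies. -/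
theorem stmt5 (G : EFG) (hPR : G.PerfectRecall) :
    ∃ β : G.Profile, G.IsNash β := by
  rcases isEmpty_or_nonempty (Fin G.n) with hE | hE
  · exact ⟨fun _ _ _ => 0, fun i => hE.elim i, fun i => hE.elim i⟩
  have : ∀ i, Nonempty (NashAux.Pure G i) := fun i =>
    ⟨fun j => ⟨_, (NashAux.infoA_nonempty G j.2).choose_spec⟩⟩
  let K : Fin G.n → (∀ p, NashAux.Pure G p → ℝ) → List ℕ → ℝ := fun i σ z =>
    G.u i z * NashAux.chA G [] z *
      ∏ p ∈ Finset.univ.erase i, NashAux.wt G p (σ p) (NashAux.hrecord G p z)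
  let V : ∀ i, NashAux.Pure G i → (∀ p, NashAux.Pure G p → ℝ) → ℝ := fun i s σ =>
    ∑ z ∈ G.Zset, K i σ z * if NashAux.Agree G i s (NashAux.hrecord G i z) then 1 else 0
  have hVc : ∀ i s, Continuous (V i s) := by
    intro i s
    simp only [V, K, NashAux.wt]
    fun_prop
  obtain ⟨σ, hσ, hVI⟩ := NashAux.exists_vi V hVc
  have hlin : ∀ i (τ : NashAux.Pure G i → ℝ), ∑ s, τ s * V i s σ =
      ∑ z ∈ G.Zset, K i σ z * NashAux.wt G i τ (NashAux.hrecord G i z) := by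
    intro i τ
    simp only [V, NashAux.wt, Finset.mul_sum]
    rw [Finset.sum_comm]
    refine Finset.sum_congr rfl fun z _ => Finset.sum_congr rfl fun s _ => ?_
    ring
  choose β hβ hβw using fun i => NashAux.kuhn G hPR i (σ i) (hσ i)
  have hpay : ∀ i (β' : G.Profile) (τ : NashAux.Pure G i → ℝ), (∀ p, p ≠ i → β' p = β p) →
      (∀ h ∈ G.H, NashAux.own (β' i) (NashAux.hrecord G i h) =
        NashAux.wt G i τ (NashAux.hrecord G i h)) →
      G.uExp i β' = ∑ s, τ s * V i s σ := by
    intro i β' τ h1 h2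
    rw [hlin]
    refine Finset.sum_congr rfl fun z hz => ?_
    have hzH : z ∈ G.H := (Finset.mem_filter.1 hz).1
    have h3 : G.omega β' z = NashAux.chA G [] z *
        ∏ p, NashAux.own (β' p) (NashAux.hrecord G p z) := NashAux.prodAlong_eq G β' z []
    rw [h3, ← Finset.prod_erase_mul _ _ (Finset.mem_univ i), h2 z hzH]
    simp only [K]
    have h4 : ∏ p ∈ Finset.univ.erase i, NashAux.own (β' p) (NashAux.hrecord G p z) =
        ∏ p ∈ Finset.univ.erase i, NashAux.wt G p (σ p) (NashAux.hrecord G p z) := by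
      refine Finset.prod_congr rfl fun p hp => ?_
      rw [h1 p (Finset.ne_of_mem_erase hp), hβw p z hzH]
    rw [h4]
    ring
  refine ⟨β, hβ, fun i b hb => ?_⟩
  obtain ⟨τ, hτ, hτw⟩ := NashAux.kuhn_conv G hPR i b hb
  rw [hpay i β (σ i) (fun _ _ => rfl) (hβw i),
    hpay i (G.replace β i b) τ (fun p hp => by simp [EFG.replace, hp])
      (by simpa [EFG.replace] using hτw)]
  calc ∑ s, τ s * V i s σ ≤ ∑ s, τ s * ∑ t, σ i t * V i t σ :=
        Finset.sum_le_sum fun s _ => mul_le_mul_of_nonneg_left (hVI i s) (hτ.1 s)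
    _ = ∑ t, σ i t * V i t σ := by rw [← Finset.sum_mul, hτ.2, one_mul]
end
end
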